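/- For every integer L₀ ≥ 1 and all ε, δ > 0, there is n₀ = n₀(ε,δ,L₀) such that for every d ∈ [0,1) and every graph collection 𝐆 = (G_c : c ∈ 𝒞) on a vertex set V of size n ≥ n₀ with δn ≤ |𝒞| ≤ n/δ, there exist a partition V = V₀ ∪ V₁ ∪ … ∪ V_L, a partition 𝒞 = 𝒞₀ ∪ 𝒞₁ ∪ … ∪ 𝒞_M, and a spanning subgraph G'_c of G_c for each c ∈ 𝒞 such that: (i) L₀ ≤ L, M ≤ n₀ and |V₀| + |𝒞₀| ≤ εn; (ii) |V₁| = … = |V_L| = |𝒞₁| = … = |𝒞_M| =: m; (iii) Σ_{c∈𝒞} d_{G'_c}(v) > Σ_{c∈𝒞} d_{G_c}(v) − (3d/δ² + ε)n² for all v ∈ V, and e(G'_c) > e(G_c) − (3d/δ² + ε)n² for all c ∈ 𝒞; (iv) if for some c ∈ 𝒞 the graph G'_c has an edge with both endpoints in a single cluster V_i with i ∈ [L], then c ∈ 𝒞₀; (v) for every pair {h,i} of distinct indices in [L] and every j ∈ [M], either G'_c[V_h,V_i] has no edges for all c ∈ 𝒞_j, or the collection (G'_c[V_h,V_i] : c ∈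 𝒞_j) is (ε,d)-regular. -/

import Mathlib

open Finset
open scoped Classical

/-- Number of ordered pairs `(x,y) ∈ A × B` with `{x,y}` an edge of `G`. -/
noncomputable def pairCount {V : Type*} (G : SimpleGraph V) (A B : Finset V) : ℕ :=
  ((A ×ˢ B).filter (fun p => G.Adj p.1 p.2)).card

/-- Number of neighbours of `v` in `B`. -/
noncomputable def degIn {V : Type*} (G : SimpleGraph V) (v : V) (B : Finset V) : ℕ :=
  (B.filter (fun w => G.Adj v w)).card

/-- Degree of `v` in `G`. -/
noncomputable def degOf {V : Type*} [Fintype V] (G : SimpleGraph V) (v : V) : ℕ :=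
  ((univ : Finset V).filter (fun w => G.Adj v w)).card

/-- Number of edges of `G`. -/
noncomputable def edgeCnt {V : Type*} [Fintype V] (G : SimpleGraph V) : ℕ :=
  ((univ : Finset (Sym2 V)).filter (fun e => e ∈ G.edgeSet)).card

/-- Number of edges of `H` with one endpoint in `A` and the other in `B`. -/
noncomputable def eBetween {W : Type*} [Fintype W] (H : SimpleGraph W) (A B : Finset W) : ℕ :=
  ((univ : Finset (Sym2 W)).filter
    (fun e => e ∈ H.edgeSet ∧ ∃ x ∈ A, ∃ y ∈ B, e = s(x, y))).card

/-- A graph `H` on `h` vertices is `μ`-separable if there is `X ⊆ V(H)` with `|X| ≤ μ h`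
such that every connected component of `H - X` has at most `μ h` vertices. -/
def Separable {W : Type*} [Fintype W] (H : SimpleGraph W) (μ : ℝ) : Prop :=
  ∃ X : Finset W, (X.card : ℝ) ≤ μ * (Fintype.card W : ℝ) ∧
    ∀ K : (SimpleGraph.induce ((↑X : Set W)ᶜ) H).ConnectedComponent,
      (K.supp.ncard : ℝ) ≤ μ * (Fintype.card W : ℝ)

/-- A transversal copy of `H` in the graph collection `G`. -/
def HasTransversal {V C W : Type*} (G : C → SimpleGraph V) (H : SimpleGraph W) : Prop :=
  ∃ (τ : W → V) (σ : Sym2 W → C),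
    Function.Injective τ ∧ Set.InjOn σ H.edgeSet ∧
    ∀ x y, H.Adj x y → (G (σ s(x, y))).Adj (τ x) (τ y)

/-- Density of a collection of bipartite graphs. -/
noncomputable def colDensity {V C : Type*} (G : C → SimpleGraph V)
    (A B : Finset V) (D : Finset C) : ℝ :=
  (∑ c ∈ D, (pairCount (G c) A B : ℝ)) / ((D.card : ℝ) * (A.card : ℝ) * (B.card : ℝ))

/-- `(ε,d)`-regularity of a collection of bipartite graphs with parts `V₁, V₂`
and colour set `D`. -/
def ColReg {V C : Type*} (ε d : ℝ) (G : C → SimpleGraph V)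
    (V₁ V₂ : Finset V) (D : Finset C) : Prop :=
  d ≤ colDensity G V₁ V₂ D ∧
  ∀ V₁' ⊆ V₁, ∀ V₂' ⊆ V₂, ∀ D' ⊆ D,
    ε * (V₁.card : ℝ) ≤ (V₁'.card : ℝ) → ε * (V₂.card : ℝ) ≤ (V₂'.card : ℝ) →
    ε * (D.card : ℝ) ≤ (D'.card : ℝ) →
    |colDensity G V₁' V₂' D' - colDensity G V₁ V₂ D| < ε

/-- `(ε,d)`-superregularity of a collection of bipartite graphs. -/
def ColSuperReg {V C : Type*} (ε d : ℝ) (G : C → SimpleGraph V)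
    (V₁ V₂ : Finset V) (D : Finset C) : Prop :=
  ColReg ε d G V₁ V₂ D ∧
  (∀ v ∈ V₁, d * (V₂.card : ℝ) * (D.card : ℝ) ≤ ∑ c ∈ D, (degIn (G c) v V₂ : ℝ)) ∧
  (∀ v ∈ V₂, d * (V₁.card : ℝ) * (D.card : ℝ) ≤ ∑ c ∈ D, (degIn (G c) v V₁ : ℝ)) ∧
  (∀ c ∈ D, d * (V₁.card : ℝ) * (V₂.card : ℝ) ≤ (pairCount (G c) V₁ V₂ : ℝ))

/-- `(ε,d)`-half-superregularity of a collection of bipartite graphs. -/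
def ColHalfSuperReg {V C : Type*} (ε d : ℝ) (G : C → SimpleGraph V)
    (V₁ V₂ : Finset V) (D : Finset C) : Prop :=
  (∀ V₁' ⊆ V₁, ∀ V₂' ⊆ V₂, ∀ D' ⊆ D,
    ε * (V₁.card : ℝ) ≤ (V₁'.card : ℝ) → ε * (V₂.card : ℝ) ≤ (V₂'.card : ℝ) →
    ε * (D.card : ℝ) ≤ (D'.card : ℝ) →
    d * (D'.card : ℝ) * (V₁'.card : ℝ) * (V₂'.card : ℝ) ≤
      ∑ c ∈ D', (pairCount (G c) V₁' V₂' : ℝ)) ∧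
  (∀ v ∈ V₁, d * (V₂.card : ℝ) * (D.card : ℝ) ≤ ∑ c ∈ D, (degIn (G c) v V₂ : ℝ)) ∧
  (∀ v ∈ V₂, d * (V₁.card : ℝ) * (D.card : ℝ) ≤ ∑ c ∈ D, (degIn (G c) v V₁ : ℝ)) ∧
  (∀ c ∈ D, d * (V₁.card : ℝ) * (V₂.card : ℝ) ≤ (pairCount (G c) V₁ V₂ : ℝ))

/-- `(ε,d)`-half-superregularity of a bipartite graph (given by an adjacency relation)
with parts `V₁, V₂`. -/
def BipHalfSuper {V : Type*} (ε d : ℝ) (A : V → V → Prop) (V₁ V₂ : Finset V) : Prop :=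
  (∀ U₁ ⊆ V₁, ∀ U₂ ⊆ V₂,
    ε * (V₁.card : ℝ) ≤ (U₁.card : ℝ) → ε * (V₂.card : ℝ) ≤ (U₂.card : ℝ) →
    d * (U₁.card : ℝ) * (U₂.card : ℝ) ≤
      (((U₁ ×ˢ U₂).filter (fun p => A p.1 p.2)).card : ℝ)) ∧
  (∀ x ∈ V₁, d * (V₂.card : ℝ) ≤ ((V₂.filter (fun y => A x y)).card : ℝ)) ∧
  (∀ y ∈ V₂, d * (V₁.card : ℝ) ≤ ((V₁.filter (fun x => A x y)).card : ℝ))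

/-- Number of ordered triples `(x₁,x₂,x₃) ∈ U₁ × U₂ × U₃` with `{x₁,x₂,x₃}` an edge. -/
noncomputable def tripCount {V : Type*} (E : Set (Finset V)) (U₁ U₂ U₃ : Finset V) : ℕ :=
  ((U₁ ×ˢ U₂ ×ˢ U₃).filter
    (fun p => ({p.1, p.2.1, p.2.2} : Finset V) ∈ E)).card

/-- Density of the triple `(U₁,U₂,U₃)` in a `3`-graph. -/
noncomputable def tripDensity {V : Type*} (E : Set (Finset V)) (U₁ U₂ U₃ : Finset V) : ℝ :=
  (tripCount E U₁ U₂ U₃ : ℝ) / ((U₁.card : ℝ) * (U₂.card : ℝ) * (U₃.card : ℝ))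

/-- Degree of a vertex in a hypergraph: the number of edges containing it. -/
noncomputable def hDeg {V : Type*} [Fintype V] (E : Set (Finset V)) (v : V) : ℕ :=
  ((univ : Finset (Finset V)).filter (fun e => e ∈ E ∧ v ∈ e)).card

/-- Weak `(ε,d)`-regularity of a 3-partite triple in a 3-graph. -/
def TripReg {V : Type*} (ε d : ℝ) (E : Set (Finset V)) (V₁ V₂ V₃ : Finset V) : Prop :=
  d ≤ tripDensity E V₁ V₂ V₃ ∧
  ∀ U₁ ⊆ V₁, ∀ U₂ ⊆ V₂, ∀ U₃ ⊆ V₃,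
    ε * (V₁.card : ℝ) ≤ (U₁.card : ℝ) → ε * (V₂.card : ℝ) ≤ (U₂.card : ℝ) →
    ε * (V₃.card : ℝ) ≤ (U₃.card : ℝ) →
    |tripDensity E U₁ U₂ U₃ - tripDensity E V₁ V₂ V₃| < ε

/-- Weak `(ε,d)`-half-superregularity of a 3-partite triple in a 3-graph. -/
def TripHalfSuper {V : Type*} (ε d : ℝ) (E : Set (Finset V)) (V₁ V₂ V₃ : Finset V) : Prop :=
  (∀ U₁ ⊆ V₁, ∀ U₂ ⊆ V₂, ∀ U₃ ⊆ V₃,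
    ε * (V₁.card : ℝ) ≤ (U₁.card : ℝ) → ε * (V₂.card : ℝ) ≤ (U₂.card : ℝ) →
    ε * (V₃.card : ℝ) ≤ (U₃.card : ℝ) →
    d * (U₁.card : ℝ) * (U₂.card : ℝ) * (U₃.card : ℝ) ≤ (tripCount E U₁ U₂ U₃ : ℝ)) ∧
  (∀ x ∈ V₁, d * (V₂.card : ℝ) * (V₃.card : ℝ) ≤ (tripCount E {x} V₂ V₃ : ℝ)) ∧
  (∀ y ∈ V₂, d * (V₁.card : ℝ) * (V₃.card : ℝ) ≤ (tripCount E V₁ {y} V₃ : ℝ)) ∧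
  (∀ z ∈ V₃, d * (V₁.card : ℝ) * (V₂.card : ℝ) ≤ (tripCount E V₁ V₂ {z} : ℝ))

/-- A copy of the 1-expansion of `H` in a 3-graph with edge set `E`. -/
def HasExpansionCopy {V W : Type*} (E : Set (Finset V)) (H : SimpleGraph W) : Prop :=
  ∃ (ρv : W → V) (ρe : Sym2 W → V),
    Function.Injective ρv ∧ Set.InjOn ρe H.edgeSet ∧
    (∀ x, ∀ e ∈ H.edgeSet, ρv x ≠ ρe e) ∧
    ∀ x y, H.Adj x y → ({ρv x, ρv y, ρe s(x, y)} : Finset V) ∈ E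

/-- Number of edges (as functions picking one vertex per part) inside the sets `U i`. -/
noncomputable def kCount {V : Type*} {k : ℕ} (E : Set (Fin k → V)) (U : Fin k → Finset V) : ℕ :=
  ((Fintype.piFinset U).filter (fun e => e ∈ E)).card

/-- Density of a `k`-tuple in a `k`-partite `k`-graph. -/
noncomputable def kDensity {V : Type*} {k : ℕ} (E : Set (Fin k → V)) (U : Fin k → Finset V) : ℝ :=
  (kCount E U : ℝ) / ∏ i, ((U i).card : ℝ)

/-- Degree of `x` as a vertex of the `i`-th part of a `k`-partite `k`-graph. -/
noncomputable def kDegAt {V : Type*} [Fintype V] {k : ℕ} (E : Set (Fin k → V))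
    (i : Fin k) (x : V) : ℕ :=
  ((univ : Finset (Fin k → V)).filter (fun e => e ∈ E ∧ e i = x)).card

/-- Weak ε-regularity of a `k`-tuple in a `k`-partite `k`-graph. -/
def KTupleReg {V : Type*} {k : ℕ} (ε : ℝ) (E : Set (Fin k → V)) (Wp : Fin k → Finset V) : Prop :=
  ∀ U : Fin k → Finset V, (∀ i, U i ⊆ Wp i) →
    (∀ i, ε * ((Wp i).card : ℝ) ≤ ((U i).card : ℝ)) →
    |kDensity E U - kDensity E Wp| < ε

/-- Weak `(ε,d)`-regularity of a `k`-partite `k`-graph with parts `P`. -/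
def KReg {V : Type*} {k : ℕ} (ε d : ℝ) (E : Set (Fin k → V)) (P : Fin k → Finset V) : Prop :=
  d ≤ kDensity E P ∧
  ∀ U : Fin k → Finset V, (∀ i, U i ⊆ P i) →
    (∀ i, ε * ((P i).card : ℝ) ≤ ((U i).card : ℝ)) →
    |kDensity E U - kDensity E P| < ε

/-- Weak `(ε,d)`-superregularity of a `k`-partite `k`-graph with parts `P`. -/
def KSuper {V : Type*} [Fintype V] {k : ℕ} (ε d : ℝ) (E : Set (Fin k → V))
    (P : Fin k → Finset V) : Prop :=
  KReg ε d E P ∧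
  ∀ i, ∀ x ∈ P i, d * (∏ j, ((P j).card : ℝ)) / ((P i).card : ℝ) ≤ (kDegAt E i x : ℝ)

/-- Weak `(ε,d)`-half-superregularity of a `k`-partite `k`-graph with parts `P`. -/
def KHalfSuper {V : Type*} [Fintype V] {k : ℕ} (ε d : ℝ) (E : Set (Fin k → V))
    (P : Fin k → Finset V) : Prop :=
  (∀ U : Fin k → Finset V, (∀ i, U i ⊆ P i) →
    (∀ i, ε * ((P i).card : ℝ) ≤ ((U i).card : ℝ)) →
    d ≤ kDensity E U) ∧
  ∀ i, ∀ x ∈ P i, d * (∏ j, ((P j).card : ℝ)) / ((P i).card : ℝ) ≤ (kDegAt E i x : ℝ)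

/-- An `R`-template: vertex clusters `Vc`, colour clusters `Cc i j` (one for each
edge `ij` of `R`), and for each colour `c ∈ Cc i j` a bipartite graph `Ge c i j`
with parts `Vc i`, `Vc j`.  The graph `G_c` of the collection is the union of the
`Ge c i j` over the edges `ij` of `R` whose colour cluster contains `c`. -/
structure GTemplate (V C : Type*) (r : ℕ) where
  R : SimpleGraph (Fin r)
  Vc : Fin r → Finset V
  Cc : Fin r → Fin r → Finset C
  Ge : C → Fin r → Fin r → SimpleGraph V
  Cc_symm : ∀ i j, Cc i j = Cc j i
  Ge_symm : ∀ c i j, Ge c i j = Ge c j i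
  Vc_disj : ∀ i j, i ≠ j → Disjoint (Vc i) (Vc j)
  Cc_support : ∀ i j, ¬ R.Adj i j → Cc i j = ∅
  Ge_support : ∀ c i j, c ∉ Cc i j → Ge c i j = ⊥
  Ge_bipartite : ∀ c i j x y, (Ge c i j).Adj x y →
    (x ∈ Vc i ∧ y ∈ Vc j) ∨ (x ∈ Vc j ∧ y ∈ Vc i)

namespace GTemplate

variable {V C : Type*} {r : ℕ}

/-- The graph `G_c` of the template: the union of the bipartite pieces. -/
noncomputable def Gc (T : GTemplate V C r) (c : C) : SimpleGraph V :=
  ⨆ i, ⨆ j, T.Ge c i j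

/-- `T` is an `R`-template with parameters `(m, ε, d, δ)`. -/
def IsParam (T : GTemplate V C r) (m ε d δ : ℝ) : Prop :=
  (∀ j, m ≤ ((T.Vc j).card : ℝ) ∧ ((T.Vc j).card : ℝ) ≤ m / δ) ∧
  (∀ i j, T.R.Adj i j → δ * m ≤ ((T.Cc i j).card : ℝ)) ∧
  (∀ i j, T.R.Adj i j →
    ColReg ε d (fun c => T.Ge c i j) (T.Vc i) (T.Vc j) (T.Cc i j))

/-- `T` is a super `R`-template with parameters `(m, ε, d, δ)`. -/
def IsSuperParam (T : GTemplate V C r) (m ε d δ : ℝ) : Prop :=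
  (∀ j, m ≤ ((T.Vc j).card : ℝ) ∧ ((T.Vc j).card : ℝ) ≤ m / δ) ∧
  (∀ i j, T.R.Adj i j → δ * m ≤ ((T.Cc i j).card : ℝ)) ∧
  (∀ i j, T.R.Adj i j →
    ColSuperReg ε d (fun c => T.Ge c i j) (T.Vc i) (T.Vc j) (T.Cc i j))

/-- `T` is a half-super `R`-template with parameters `(m, ε, d, δ)`. -/
def IsHalfSuperParam (T : GTemplate V C r) (m ε d δ : ℝ) : Prop :=
  (∀ j, m ≤ ((T.Vc j).card : ℝ) ∧ ((T.Vc j).card : ℝ) ≤ m / δ) ∧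
  (∀ i j, T.R.Adj i j → δ * m ≤ ((T.Cc i j).card : ℝ)) ∧
  (∀ i j, T.R.Adj i j →
    ColHalfSuperReg ε d (fun c => T.Ge c i j) (T.Vc i) (T.Vc j) (T.Cc i j))

/-- `T` is a semi-super `R`-template with parameters `(m, ε, d, δ)`. -/
def IsSemiSuperParam (T : GTemplate V C r) (m ε d δ : ℝ) : Prop :=
  T.IsParam m ε d δ ∧
  ∀ i j, T.R.Adj i j →
    (∀ v ∈ T.Vc i, d * ((T.Vc j).card : ℝ) * ((T.Cc i j).card : ℝ) ≤
      ∑ c ∈ T.Cc i j, (degIn (T.Ge c i j) v (T.Vc j) : ℝ)) ∧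
    (∀ v ∈ T.Vc j, d * ((T.Vc i).card : ℝ) * ((T.Cc i j).card : ℝ) ≤
      ∑ c ∈ T.Cc i j, (degIn (T.Ge c i j) v (T.Vc i) : ℝ))

/-- The template is rainbow: the colour clusters are pairwise disjoint. -/
def Rainbow (T : GTemplate V C r) : Prop :=
  ∀ i j k l, T.R.Adj i j → T.R.Adj k l → s(i, j) ≠ s(k, l) →
    Disjoint (T.Cc i j) (T.Cc k l)

/-- Adjacency in the `l`-thick graph of the template, between clusters `i` and `j`. -/
def ThickAdj (T : GTemplate V C r) (l : ℝ) (i j : Fin r) (x y : V) : Prop :=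
  l * ((T.Cc i j).card : ℝ) ≤
    (((T.Cc i j).filter (fun c => (T.Ge c i j).Adj x y)).card : ℝ)

end GTemplate

/-!
View the collection as the 0/1 function `(x, y, c) ↦ 𝟙[xy ∈ G_c]` on `V × V × C`, and measure a
pair of partitions of `V` and of `C` by the mean square of the conditional expectation of this
function. Splitting all cells along witnesses of irregularity raises this energy by a fixed amount,
so after boundedly many rounds the clusters, all cut to one common size, have few irregular triples.

Deleting the edges that lie inside a cluster or in an irregular or sparse triple costs little in
total, but may cost too much at some vertices or in some colours. These are few, so they can be
moved to the exceptional sets by discarding the clusters that contain many of them and trimming the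
others to one slightly smaller size. Regularity survives because trimmed clusters are large subsets
of the original ones, and edges at exceptional vertices or in exceptional colours are never deleted.
-/

open scoped BigOperators

section Energy

variable {Ω ρ ρ' ι : Type*} [Fintype Ω] {f h : Ω → ℝ} {r : Ω → ρ} {r' : Ω → ρ'}

/-- The conditional expectation of `f` given the labelling `r`: at `ω` it is the average of `f` over
all points that carry the label of `ω`. Partitions are encoded throughout as labellings; a labelling
`r'` refines `r` when `r.FactorsThrough r'`. -/
noncomputable def fiberAverage (f : Ω → ℝ) (r : Ω → ρ) (ω : Ω) : ℝ :=
  𝔼 ω' with r ω' = r ω, f ω'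

/-- The energy (mean-square density) of `f` with respect to the labelling `r`, the quantity that
increases along the iteration in the regularity lemma. -/
noncomputable def energy (f : Ω → ℝ) (r : Ω → ρ) : ℝ :=
  𝔼 ω, fiberAverage f r ω ^ 2

theorem fiberAverage_factorsThrough (f : Ω → ℝ) (r : Ω → ρ) :
    (fiberAverage f r).FactorsThrough r := fun a b hab => by
  simp only [fiberAverage, hab]

theorem fiberAverage_eq_expect_of_mem_iff {T : Finset Ω} {ω : Ω}
    (hT : ∀ ω', ω' ∈ T ↔ r ω' = r ω) : fiberAverage f r ω = 𝔼 ω' ∈ T, f ω' := by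
  rw [fiberAverage]
  congr 1
  ext ω'
  simp [hT]

theorem sum_fiberAverage_mul (f : Ω → ℝ) (hh : h.FactorsThrough r) :
    ∑ ω, fiberAverage f r ω * h ω = ∑ ω, f ω * h ω := by
  have hmaps : ∀ ω ∈ univ, r ω ∈ univ.image r := fun ω hω => mem_image_of_mem r hω
  rw [← sum_fiberwise_of_maps_to hmaps, ← sum_fiberwise_of_maps_to hmaps]
  refine sum_congr rfl fun y hy => ?_
  obtain ⟨ω₀, -, rfl⟩ := mem_image.1 hy
  calc
    ∑ ω with r ω = r ω₀, fiberAverage f r ω * h ω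
      = ∑ ω with r ω = r ω₀, (𝔼 ω' with r ω' = r ω₀, f ω') * h ω₀ :=
        sum_congr rfl fun ω hω => by
          rw [hh (mem_filter.1 hω).2, fiberAverage_factorsThrough f r (mem_filter.1 hω).2,
            fiberAverage]
    _ = (∑ ω with r ω = r ω₀, f ω) * h ω₀ := by
        rw [sum_const, nsmul_eq_mul, ← mul_assoc, card_mul_expect]
    _ = ∑ ω with r ω = r ω₀, f ω * h ω := by
        rw [sum_mul]
        exact sum_congr rfl fun ω hω => by rw [hh (mem_filter.1 hω).2]

theorem energy_eq_energy_add_expect_sq (f : Ω → ℝ) (hr : r.FactorsThrough r') :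
    energy f r' =
      energy f r + 𝔼 ω, (fiberAverage f r' ω - fiberAverage f r ω) ^ 2 := by
  have hcross : ∑ ω, fiberAverage f r' ω * fiberAverage f r ω =
      ∑ ω, fiberAverage f r ω * fiberAverage f r ω := by
    rw [sum_fiberAverage_mul f fun a b hab => fiberAverage_factorsThrough f r (hr hab),
      sum_fiberAverage_mul f (fiberAverage_factorsThrough f r)]
  have hsum : ∑ ω, (fiberAverage f r' ω - fiberAverage f r ω) ^ 2 =
      ∑ ω, fiberAverage f r' ω ^ 2 - ∑ ω, fiberAverage f r ω ^ 2 := by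
    have hexpand : ∀ ω, (fiberAverage f r' ω - fiberAverage f r ω) ^ 2 =
        fiberAverage f r' ω ^ 2 - 2 * (fiberAverage f r' ω * fiberAverage f r ω) +
          fiberAverage f r ω * fiberAverage f r ω := fun ω => by ring
    simp only [hexpand, sum_add_distrib, sum_sub_distrib, ← mul_sum, hcross, pow_two]
    ring
  rw [energy, energy, expect_eq_sum_div_card, expect_eq_sum_div_card, expect_eq_sum_div_card, hsum]
  ring

theorem energy_mono (f : Ω → ℝ) (hr : r.FactorsThrough r') : energy f r ≤ energy f r' := by
  rw [energy_eq_energy_add_expect_sq f hr, le_add_iff_nonneg_right]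
  exact expect_nonneg fun ω _ => sq_nonneg _

theorem energy_nonneg (f : Ω → ℝ) (r : Ω → ρ) : 0 ≤ energy f r :=
  expect_nonneg fun _ _ => sq_nonneg _

theorem energy_le_one (hf₀ : ∀ ω, 0 ≤ f ω) (hf₁ : ∀ ω, f ω ≤ 1) (r : Ω → ρ) :
    energy f r ≤ 1 := by
  have hid : ∀ ω, fiberAverage f id ω = f ω := fun ω => by
    rw [fiberAverage_eq_expect_of_mem_iff (T := {ω}) (by simp), expect_singleton]
  calc
    energy f r ≤ energy f id := energy_mono f fun a b (hab : a = b) => congrArg r hab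
    _ ≤ 1 := by
      rcases isEmpty_or_nonempty Ω with hΩ | hΩ
      · simp [energy]
      · refine expect_le univ_nonempty fun ω _ => ?_
        rw [hid]
        exact pow_le_one₀ (hf₀ ω) (hf₁ ω)

theorem card_mul_sq_expect_sub_expect_le {S T : Finset Ω} (f : Ω → ℝ) (hST : S ⊆ T)
    (hS : (· ∈ S).FactorsThrough r') (hT : ∀ ω ∈ T, ∀ ω', ω' ∈ T ↔ r ω' = r ω) :
    #S * (𝔼 ω ∈ S, f ω - 𝔼 ω ∈ T, f ω) ^ 2 ≤
      ∑ ω ∈ S, (fiberAverage f r' ω - fiberAverage f r ω) ^ 2 := by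
  have hcoarse : ∑ ω ∈ S, fiberAverage f r ω = #S * 𝔼 ω ∈ T, f ω := by
    rw [← nsmul_eq_mul, ← sum_const]
    exact sum_congr rfl fun ω hω => fiberAverage_eq_expect_of_mem_iff (hT ω (hST hω))
  have hfine : ∑ ω ∈ S, fiberAverage f r' ω = #S * 𝔼 ω ∈ S, f ω := by
    have hind : (fun ω => if ω ∈ S then (1 : ℝ) else 0).FactorsThrough r' := fun a b hab => by
      simp only [show (a ∈ S) = (b ∈ S) from hS hab]
    rw [card_mul_expect]
    simpa only [mul_ite, mul_one, mul_zero, sum_ite_mem, univ_inter] using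
      sum_fiberAverage_mul f hind
  have hsum : ∑ ω ∈ S, (fiberAverage f r' ω - fiberAverage f r ω) =
      #S * (𝔼 ω ∈ S, f ω - 𝔼 ω ∈ T, f ω) := by
    rw [sum_sub_distrib, hcoarse, hfine, mul_sub]
  rcases S.eq_empty_or_nonempty with rfl | hne
  · simp
  · have hpos : (0 : ℝ) < #S := by exact_mod_cast hne.card_pos
    refine le_of_mul_le_mul_left ?_ hpos
    calc
      #S * (#S * (𝔼 ω ∈ S, f ω - 𝔼 ω ∈ T, f ω) ^ 2)
        = (∑ ω ∈ S, (fiberAverage f r' ω - fiberAverage f r ω)) ^ 2 := by rw [hsum]; ring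
      _ ≤ _ := sq_sum_le_card_mul_sum_sq

theorem energy_add_le_energy_of_irregular {I : Finset ι} {S T : ι → Finset Ω} {α e : ℝ}
    (he : 0 ≤ e) (hr : r.FactorsThrough r')
    (hT : ∀ t ∈ I, ∀ ω ∈ T t, ∀ ω', ω' ∈ T t ↔ r ω' = r ω) (hdisj : (I : Set ι).PairwiseDisjoint T)
    (hST : ∀ t ∈ I, S t ⊆ T t) (hS : ∀ t ∈ I, (· ∈ S t).FactorsThrough r')
    (hcard : ∀ t ∈ I, α * #(T t) ≤ #(S t))
    (hdev : ∀ t ∈ I, e ≤ |𝔼 ω ∈ S t, f ω - 𝔼 ω ∈ T t, f ω|) :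
    energy f r + α * e ^ 2 * (∑ t ∈ I, (#(T t) : ℝ)) / Fintype.card Ω ≤ energy f r' := by
  rw [energy_eq_energy_add_expect_sq f hr, expect_eq_sum_div_card, card_univ]
  gcongr
  have hdisjS : (I : Set ι).PairwiseDisjoint S := fun a ha b hb hab =>
    (hdisj ha hb hab).mono (hST a ha) (hST b hb)
  calc
    α * e ^ 2 * ∑ t ∈ I, (#(T t) : ℝ) = ∑ t ∈ I, α * #(T t) * e ^ 2 := by
      rw [mul_sum]
      exact sum_congr rfl fun t _ => by ring
    _ ≤ ∑ t ∈ I, #(S t) * (𝔼 ω ∈ S t, f ω - 𝔼 ω ∈ T t, f ω) ^ 2 := by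
      refine sum_le_sum fun t ht => mul_le_mul (hcard t ht) ?_ (sq_nonneg e) (Nat.cast_nonneg _)
      rw [← sq_abs (_ - _)]
      exact pow_le_pow_left₀ he (hdev t ht) 2
    _ ≤ ∑ t ∈ I, ∑ ω ∈ S t, (fiberAverage f r' ω - fiberAverage f r ω) ^ 2 :=
      sum_le_sum fun t ht => card_mul_sq_expect_sub_expect_le f (hST t ht) (hS t ht) (hT t ht)
    _ = ∑ ω ∈ I.biUnion S, (fiberAverage f r' ω - fiberAverage f r ω) ^ 2 :=
      (sum_biUnion hdisjS).symm
    _ ≤ ∑ ω, (fiberAverage f r' ω - fiberAverage f r ω) ^ 2 :=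
      sum_le_univ_sum_of_nonneg fun ω => sq_nonneg _

end Energy

section SetFamily

variable {X β : Type*} {𝒮 𝒯 𝒜 : Finset (Finset X)} {m : ℕ} {κ ℓ : ℝ}

/-- The atom of the family `𝒮` containing a point, encoded as the set of members of `𝒮` containing
that point. Labelling by `atomLabel 𝒮` is thus the partition generated by `𝒮`, so refining a
partition just means enlarging a family. -/
noncomputable def atomLabel (𝒮 : Finset (Finset X)) (x : X) : Finset (Finset X) :=
  {S ∈ 𝒮 | x ∈ S}

theorem atomLabel_eq_iff {x y : X} :
    atomLabel 𝒮 x = atomLabel 𝒮 y ↔ ∀ S ∈ 𝒮, x ∈ S ↔ y ∈ S :=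
  filter_inj'

theorem atomLabel_factorsThrough (h : 𝒮 ⊆ 𝒯) :
    (atomLabel 𝒮).FactorsThrough (atomLabel 𝒯) := fun _ _ hxy =>
  atomLabel_eq_iff.2 fun S hS => atomLabel_eq_iff.1 hxy S (h hS)

theorem mem_iff_atomLabel_union_eq (hdisj : (𝒜 : Set (Finset X)).PairwiseDisjoint id)
    (hatom : ∀ A ∈ 𝒜, ∀ x ∈ A, ∀ y ∈ A, atomLabel 𝒮 x = atomLabel 𝒮 y) {A : Finset X}
    (hA : A ∈ 𝒜) {x : X} (hx : x ∈ A) (y : X) :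
    y ∈ A ↔ atomLabel (𝒮 ∪ 𝒜) y = atomLabel (𝒮 ∪ 𝒜) x := by
  refine ⟨fun hy => atomLabel_eq_iff.2 fun S hS => ?_, fun h =>
    (atomLabel_eq_iff.1 h A (mem_union_right _ hA)).2 hx⟩
  rcases mem_union.1 hS with hS | hS
  · exact atomLabel_eq_iff.1 (hatom A hA y hy x hx) S hS
  · have heq : ∀ z ∈ A, z ∈ S → S = A := fun z hzA hzS => hdisj.elim_finset hS hA z hzS hzA
    exact ⟨fun h => heq y hy h ▸ hx, fun h => heq x hx h ▸ hy⟩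

/-- `𝒜` consists of pairwise disjoint sets of size exactly `m` that cover all but at most `ℓ`
points. The uncovered points form the exceptional class of the partition, which is not recorded. -/
structure IsAlmostEquipartition [Fintype X] (𝒜 : Finset (Finset X)) (m : ℕ) (ℓ : ℝ) : Prop where
  sized : (𝒜 : Set (Finset X)).Sized m
  pairwiseDisjoint : (𝒜 : Set (Finset X)).PairwiseDisjoint id
  card_uncovered_le : (#(𝒜.biUnion id)ᶜ : ℝ) ≤ ℓ

theorem card_mul_add_card_uncovered [Fintype X] (hsized : (𝒜 : Set (Finset X)).Sized m)
    (hdisj : (𝒜 : Set (Finset X)).PairwiseDisjoint id) :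
    #𝒜 * m + #(𝒜.biUnion id)ᶜ = Fintype.card X := by
  rw [← card_add_card_compl (𝒜.biUnion id), card_biUnion hdisj]
  exact congrArg (· + _) (sum_const_nat hsized).symm

theorem IsAlmostEquipartition.card_mul_le [Fintype X] (h : IsAlmostEquipartition 𝒜 m ℓ) :
    #𝒜 * m ≤ Fintype.card X :=
  (card_mul_add_card_uncovered h.sized h.pairwiseDisjoint).le.trans' (Nat.le_add_right _ _)

theorem IsAlmostEquipartition.card_le_card_mul_add [Fintype X]
    (h : IsAlmostEquipartition 𝒜 m ℓ) : (Fintype.card X : ℝ) ≤ #𝒜 * m + ℓ := by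
  rw [← card_mul_add_card_uncovered h.sized h.pairwiseDisjoint]
  push_cast
  gcongr
  exact h.card_uncovered_le

theorem exists_isAlmostEquipartition_monochromatic [Fintype X] {p : X → β} {t : Finset β}
    (hp : ∀ x, p x ∈ t) (hm : 0 < m) :
    ∃ 𝒜 : Finset (Finset X), IsAlmostEquipartition 𝒜 m (#t * m) ∧
      ∀ A ∈ 𝒜, ∀ x ∈ A, ∀ y ∈ A, p x = p y := by
  let P (𝒜 : Finset (Finset X)) : Prop := (𝒜 : Set (Finset X)).Sized m ∧
    (𝒜 : Set (Finset X)).PairwiseDisjoint id ∧ ∀ A ∈ 𝒜, ∀ x ∈ A, ∀ y ∈ A, p x = p y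
  obtain ⟨𝒜, ⟨hsized, hdisj, hmono⟩, hmax⟩ : ∃ 𝒜, Maximal P 𝒜 :=
    (Set.toFinite {𝒜 | P 𝒜}).exists_maximal ⟨∅, by simp [P, Set.Sized]⟩
  refine ⟨𝒜, ⟨hsized, hdisj, ?_⟩, hmono⟩
  by_contra! hlarge
  obtain ⟨y, -, hy⟩ := exists_lt_card_fiber_of_mul_lt_card_of_maps_to (fun x _ => hp x)
    (show #t * m < #(𝒜.biUnion id)ᶜ by exact_mod_cast hlarge)
  obtain ⟨A, hAsub, hAcard⟩ := exists_subset_card_eq hy.le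
  have hA : ∀ x ∈ A, x ∉ 𝒜.biUnion id ∧ p x = y := fun x hx => by
    simpa only [mem_filter, mem_compl] using hAsub hx
  have hAdisj : ∀ B ∈ 𝒜, Disjoint A B := fun B hB =>
    disjoint_left.2 fun x hxA hxB => (hA x hxA).1 (mem_biUnion.2 ⟨B, hB, hxB⟩)
  have hAmem : A ∈ 𝒜 := hmax (y := insert A 𝒜) ⟨?_, ?_, ?_⟩ (subset_insert A 𝒜)
    (mem_insert_self A 𝒜)
  · obtain ⟨x, hx⟩ := card_pos.1 (hAcard ▸ hm)
    exact (hA x hx).1 (mem_biUnion.2 ⟨A, hAmem, hx⟩)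
  · simpa only [Set.Sized, coe_insert, Set.forall_mem_insert, mem_coe] using ⟨hAcard, hsized⟩
  · rw [coe_insert]
    exact hdisj.insert fun B hB _ => hAdisj B hB
  · exact (forall_mem_insert _ _ _).2 ⟨fun x hx z hz => (hA x hx).2.trans (hA z hz).2.symm, hmono⟩

theorem card_filter_le_card_inter_mul_le (hdisj : (𝒜 : Set (Finset X)).PairwiseDisjoint id)
    (B : Finset X) (k : ℝ) : #{A ∈ 𝒜 | k ≤ #(A ∩ B)} * k ≤ #B := by
  have hinter : (𝒜 : Set (Finset X)).PairwiseDisjoint (· ∩ B) := fun A hA A' hA' hne =>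
    (hdisj hA hA' hne).mono inter_subset_left inter_subset_left
  have hfilter : (({A ∈ 𝒜 | k ≤ #(A ∩ B)} : Finset _) : Set (Finset X)).PairwiseDisjoint (· ∩ B) :=
    hinter.subset (coe_subset.2 (filter_subset _ _))
  calc
    #{A ∈ 𝒜 | k ≤ #(A ∩ B)} * k = ∑ A ∈ 𝒜 with k ≤ #(A ∩ B), k := by
      rw [sum_const, nsmul_eq_mul]
    _ ≤ ∑ A ∈ 𝒜 with k ≤ #(A ∩ B), (#(A ∩ B) : ℝ) :=
      sum_le_sum fun A hA => (mem_filter.1 hA).2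
    _ = #(({A ∈ 𝒜 | k ≤ #(A ∩ B)} : Finset _).biUnion (· ∩ B)) := by
      rw [card_biUnion hfilter, Nat.cast_sum]
    _ ≤ #B := by
      exact_mod_cast card_le_card (biUnion_subset.2 fun A _ => inter_subset_right)

theorem exists_sized_shrink_avoiding (hdisj : (𝒜 : Set (Finset X)).PairwiseDisjoint id)
    {B : Finset X} (hm : 0 < m) (h𝒜 : ∀ A ∈ 𝒜, m ≤ #(A \ B)) :
    ∃ 𝒜' : Finset (Finset X), (𝒜' : Set (Finset X)).Sized m ∧
      (𝒜' : Set (Finset X)).PairwiseDisjoint id ∧ #𝒜' = #𝒜 ∧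
      ∀ A' ∈ 𝒜', Disjoint A' B ∧ ∃ A ∈ 𝒜, A' ⊆ A := by
  choose! s hs_sub hs_card using fun A hA => exists_subset_card_eq (h𝒜 A hA)
  have hs_subset : ∀ A ∈ 𝒜, s A ⊆ A := fun A hA => (hs_sub A hA).trans sdiff_subset
  have hs_disj : (𝒜 : Set (Finset X)).PairwiseDisjoint s := fun A hA A' hA' hne =>
    (hdisj hA hA' hne).mono (hs_subset A hA) (hs_subset A' hA')
  have hs_inj : Set.InjOn s 𝒜 := fun A hA A' hA' heq => by
    obtain ⟨x, hx⟩ := card_pos.1 ((hs_card A hA).symm ▸ hm)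
    exact hs_disj.elim_finset hA hA' x hx (heq ▸ hx)
  refine ⟨𝒜.image s, ?_, ?_, card_image_of_injOn hs_inj, ?_⟩
  · rw [coe_image]
    exact Set.forall_mem_image.2 hs_card
  · rw [coe_image, hs_inj.pairwiseDisjoint_image]
    exact hs_disj
  · exact forall_mem_image.2 fun A hA =>
      ⟨disjoint_of_subset_left (hs_sub A hA) sdiff_disjoint, A, hA, hs_subset A hA⟩

theorem IsAlmostEquipartition.exists_trim [Fintype X] (h : IsAlmostEquipartition 𝒜 m ℓ)
    (hm : 0 < m) (hκ₀ : 0 < κ) (hκ₁ : κ < 1) {B : Finset X} (hB : #B ≤ κ ^ 2 * Fintype.card X) :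
    ∃ 𝒜' : Finset (Finset X),
      IsAlmostEquipartition 𝒜' (m - ⌊κ * m⌋₊) (ℓ + 2 * κ * Fintype.card X) ∧
      #𝒜' ≤ #𝒜 ∧ ∀ A' ∈ 𝒜', Disjoint A' B ∧ ∃ A ∈ 𝒜, A' ⊆ A := by
  set f := ⌊κ * m⌋₊
  have hmR : (0 : ℝ) < m := by exact_mod_cast hm
  have hfκ : (f : ℝ) ≤ κ * m := Nat.floor_le (by positivity)
  have hfm : f < m := by
    exact_mod_cast hfκ.trans_lt (mul_lt_of_lt_one_left hmR hκ₁)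
  have hpoor : (#{A ∈ 𝒜 | κ * m ≤ #(A ∩ B)} : ℝ) * m ≤ κ * Fintype.card X := by
    refine le_of_mul_le_mul_left ?_ hκ₀
    linarith [card_filter_le_card_inter_mul_le h.pairwiseDisjoint B (κ * m)]
  set good := {A ∈ 𝒜 | ¬ κ * m ≤ #(A ∩ B)}
  have hgood_sub : good ⊆ 𝒜 := filter_subset _ _
  have hcard : #{A ∈ 𝒜 | κ * m ≤ #(A ∩ B)} + #good = #𝒜 := card_filter_add_card_filter_not _
  have hroom : ∀ A ∈ good, m - f ≤ #(A \ B) := fun A hA => by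
    have hinter : #(A ∩ B) ≤ f := Nat.le_floor (not_le.1 (mem_filter.1 hA).2).le
    have hsplit := card_sdiff_add_card_inter A B
    rw [h.sized (hgood_sub hA)] at hsplit
    omega
  obtain ⟨𝒜', hsized, hdisj, hcard', hsub⟩ := exists_sized_shrink_avoiding
    (h.pairwiseDisjoint.subset (coe_subset.2 hgood_sub)) (Nat.sub_pos_of_lt hfm) hroom
  refine ⟨𝒜', ⟨hsized, hdisj, ?_⟩, hcard'.trans_le (card_le_card hgood_sub), fun A' hA' =>
    ⟨(hsub A' hA').1, (hsub A' hA').2.imp fun A hA => ⟨hgood_sub hA.1, hA.2⟩⟩⟩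
  have htotal : (#good : ℝ) * (m - f) + #(𝒜'.biUnion id)ᶜ = Fintype.card X := by
    rw [← hcard', ← Nat.cast_sub hfm.le]
    exact_mod_cast card_mul_add_card_uncovered hsized hdisj
  have hfloor : (#good : ℝ) * f ≤ κ * Fintype.card X := by
    have hcover : (#good : ℝ) * m ≤ Fintype.card X := by
      exact_mod_cast (Nat.mul_le_mul_right m (card_le_card hgood_sub)).trans h.card_mul_le
    calc
      (#good : ℝ) * f ≤ #good * (κ * m) := by gcongr
      _ = κ * (#good * m) := by ring
      _ ≤ κ * Fintype.card X := by gcongr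
  have htotal𝒜 : (Fintype.card X : ℝ) ≤ (#{A ∈ 𝒜 | κ * m ≤ #(A ∩ B)} + #good) * m + ℓ := by
    exact_mod_cast hcard ▸ h.card_le_card_mul_add
  linarith

end SetFamily

section Density

variable {V C : Type*} {G G' : C → SimpleGraph V} {A A' B B' : Finset V} {D D' : Finset C}
  {e ε d : ℝ}

theorem pairCount_comm (H : SimpleGraph V) (A B : Finset V) : pairCount H A B = pairCount H B A :=
  have := H.symm
  Rel.card_interedges_comm (r := H.Adj) A B

theorem pairCount_le_card_mul_card (H : SimpleGraph V) (A B : Finset V) :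
    pairCount H A B ≤ #A * #B :=
  H.card_interedges_le_mul A B

theorem colDensity_comm (G : C → SimpleGraph V) (A B : Finset V) (D : Finset C) :
    colDensity G A B D = colDensity G B A D := by
  simp only [colDensity, pairCount_comm _ A B, mul_right_comm]

theorem colDensity_nonneg (G : C → SimpleGraph V) (A B : Finset V) (D : Finset C) :
    0 ≤ colDensity G A B D := by
  unfold colDensity
  positivity

theorem ColReg.symm (h : ColReg ε d G A B D) : ColReg ε d G B A D := by
  refine ⟨colDensity_comm G A B D ▸ h.1, fun B' hB' A' hA' D' hD' hB hA hD => ?_⟩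
  rw [colDensity_comm G B', colDensity_comm G B]
  exact h.2 A' hA' B' hB' D' hD' hA hB hD

theorem exists_deviation_of_not_colReg_zero (h : ¬ ColReg e 0 G A B D) :
    ∃ A' ⊆ A, ∃ B' ⊆ B, ∃ D' ⊆ D, e * #A ≤ #A' ∧ e * #B ≤ #B' ∧ e * #D ≤ #D' ∧
      e ≤ |colDensity G A' B' D' - colDensity G A B D| := by
  by_contra! hdev
  exact h ⟨colDensity_nonneg G A B D, hdev⟩

theorem colDensity_congr (h : ∀ c ∈ D, ∀ x ∈ A, ∀ y ∈ B, (G c).Adj x y ↔ (G' c).Adj x y) :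
    colDensity G A B D = colDensity G' A B D := by
  unfold colDensity pairCount
  refine congrArg (· / _) (sum_congr rfl fun c hc => congrArg (fun s => (#s : ℝ)) ?_)
  exact filter_congr fun p hp => h c hc p.1 (mem_product.1 hp).1 p.2 (mem_product.1 hp).2

theorem ColReg.congr (hreg : ColReg ε d G A B D)
    (h : ∀ c ∈ D, ∀ x ∈ A, ∀ y ∈ B, (G c).Adj x y ↔ (G' c).Adj x y) : ColReg ε d G' A B D := by
  refine ⟨colDensity_congr h ▸ hreg.1, fun A' hA' B' hB' D' hD' hA hB hD => ?_⟩
  rw [← colDensity_congr h,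
    ← colDensity_congr fun c hc x hx y hy => h c (hD' hc) x (hA' hx) y (hB' hy)]
  exact hreg.2 A' hA' B' hB' D' hD' hA hB hD

/-- The indicator function of the tripartite incidence relation "`{x, y}` is an edge of `G c`" on
`V × V × C`, whose averages over boxes are the densities `colDensity`. -/
noncomputable def edgeIndicator (G : C → SimpleGraph V) (t : V × V × C) : ℝ :=
  if (G t.2.2).Adj t.1 t.2.1 then 1 else 0

theorem expect_edgeIndicator (G : C → SimpleGraph V) (A B : Finset V) (D : Finset C) :
    𝔼 t ∈ A ×ˢ B ×ˢ D, edgeIndicator G t = colDensity G A B D := by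
  have hcount (c : C) : ∑ x ∈ A, ∑ y ∈ B, edgeIndicator G (x, y, c) = pairCount (G c) A B := by
    rw [← sum_product']
    simp only [edgeIndicator, pairCount, sum_boole]
  have hsum : ∑ t ∈ A ×ˢ B ×ˢ D, edgeIndicator G t = ∑ c ∈ D, (pairCount (G c) A B : ℝ) := by
    simp only [sum_product, ← hcount]
    exact (sum_congr rfl fun x _ => sum_comm).trans sum_comm
  rw [expect_eq_sum_div_card, colDensity, hsum, card_product, card_product]
  push_cast
  ring

end Density

section Increment

variable {V C : Type*} {G : C → SimpleGraph V} {𝒮 𝒮' 𝒜 : Finset (Finset V)}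
  {𝒯 𝒯' 𝒟 : Finset (Finset C)} {e : ℝ} {m : ℕ}

/-- The labelling of `V × V × C` generated by a family of vertex sets, used on both vertex
coordinates, and a family of colour sets. -/
noncomputable def tripleLabel (𝒮 : Finset (Finset V)) (𝒯 : Finset (Finset C)) :
    V × V × C → Finset (Finset V) × Finset (Finset V) × Finset (Finset C) :=
  Prod.map (atomLabel 𝒮) (Prod.map (atomLabel 𝒮) (atomLabel 𝒯))

theorem tripleLabel_eq_iff {s t : V × V × C} :
    tripleLabel 𝒮 𝒯 s = tripleLabel 𝒮 𝒯 t ↔ atomLabel 𝒮 s.1 = atomLabel 𝒮 t.1 ∧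
      atomLabel 𝒮 s.2.1 = atomLabel 𝒮 t.2.1 ∧ atomLabel 𝒯 s.2.2 = atomLabel 𝒯 t.2.2 := by
  simp only [tripleLabel, Prod.map, Prod.mk.injEq]

theorem tripleLabel_factorsThrough (h𝒮 : 𝒮 ⊆ 𝒮') (h𝒯 : 𝒯 ⊆ 𝒯') :
    (tripleLabel 𝒮 𝒯).FactorsThrough (tripleLabel 𝒮' 𝒯') := fun _ _ hst => by
  obtain ⟨h₁, h₂, h₃⟩ := tripleLabel_eq_iff.1 hst
  exact tripleLabel_eq_iff.2 ⟨atomLabel_factorsThrough h𝒮 h₁, atomLabel_factorsThrough h𝒮 h₂,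
    atomLabel_factorsThrough h𝒯 h₃⟩

theorem mem_box_factorsThrough_tripleLabel {A B : Finset V} {D : Finset C} (hA : A ∈ 𝒮)
    (hB : B ∈ 𝒮) (hD : D ∈ 𝒯) :
    (· ∈ A ×ˢ B ×ˢ D).FactorsThrough (tripleLabel 𝒮 𝒯) := fun _ _ hst => by
  obtain ⟨h₁, h₂, h₃⟩ := tripleLabel_eq_iff.1 hst
  simp only [mem_product, atomLabel_eq_iff.1 h₁ A hA, atomLabel_eq_iff.1 h₂ B hB,
    atomLabel_eq_iff.1 h₃ D hD]

theorem pairwiseDisjoint_box (h𝒜 : (𝒜 : Set (Finset V)).PairwiseDisjoint id)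
    (h𝒟 : (𝒟 : Set (Finset C)).PairwiseDisjoint id) :
    ((𝒜 ×ˢ 𝒜 ×ˢ 𝒟 : Finset _) : Set (Finset V × Finset V × Finset C)).PairwiseDisjoint
      fun t => t.1 ×ˢ t.2.1 ×ˢ t.2.2 := by
  rintro ⟨A, B, D⟩ hs ⟨A', B', D'⟩ ht hne
  simp only [coe_product, Set.mem_prod, mem_coe] at hs ht
  refine disjoint_left.2 fun ω hω hω' => hne ?_
  simp only [mem_product] at hω hω'
  rw [h𝒜.elim_finset hs.1 ht.1 _ hω.1 hω'.1, h𝒜.elim_finset hs.2.1 ht.2.1 _ hω.2.1 hω'.2.1,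
    h𝒟.elim_finset hs.2.2 ht.2.2 _ hω.2.2 hω'.2.2]

theorem sum_card_box (h𝒜 : (𝒜 : Set (Finset V)).Sized m) (h𝒟 : (𝒟 : Set (Finset C)).Sized m)
    {I : Finset (Finset V × Finset V × Finset C)} (hI : I ⊆ 𝒜 ×ˢ 𝒜 ×ˢ 𝒟) :
    ∑ t ∈ I, #(t.1 ×ˢ t.2.1 ×ˢ t.2.2) = #I * m ^ 3 := by
  refine sum_const_nat fun t ht => ?_
  obtain ⟨h₁, h₂, h₃⟩ : t.1 ∈ 𝒜 ∧ t.2.1 ∈ 𝒜 ∧ t.2.2 ∈ 𝒟 := by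
    simpa only [mem_product] using hI ht
  rw [card_product, card_product, h𝒜 h₁, h𝒜 h₂, h𝒟 h₃]
  ring

/-- The triples of two vertex clusters and a colour cluster that fail to be `e`-regular. Since
densities are nonnegative, `ColReg e 0` is regularity without a density requirement. -/
noncomputable def irregularTriples (e : ℝ) (G : C → SimpleGraph V) (𝒜 : Finset (Finset V))
    (𝒟 : Finset (Finset C)) : Finset (Finset V × Finset V × Finset C) :=
  {t ∈ 𝒜 ×ˢ 𝒜 ×ˢ 𝒟 | ¬ ColReg e 0 G t.1 t.2.1 t.2.2}

theorem mem_box_iff_tripleLabel_eq (h𝒜 : (𝒜 : Set (Finset V)).PairwiseDisjoint id)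
    (h𝒟 : (𝒟 : Set (Finset C)).PairwiseDisjoint id)
    (h𝒮 : ∀ A ∈ 𝒜, ∀ x ∈ A, ∀ y ∈ A, atomLabel 𝒮 x = atomLabel 𝒮 y)
    (h𝒯 : ∀ D ∈ 𝒟, ∀ c ∈ D, ∀ c' ∈ D, atomLabel 𝒯 c = atomLabel 𝒯 c') {A B : Finset V}
    {D : Finset C} (hA : A ∈ 𝒜) (hB : B ∈ 𝒜) (hD : D ∈ 𝒟) {s : V × V × C}
    (hs : s ∈ A ×ˢ B ×ˢ D) (t : V × V × C) :
    t ∈ A ×ˢ B ×ˢ D ↔ tripleLabel (𝒮 ∪ 𝒜) (𝒯 ∪ 𝒟) t = tripleLabel (𝒮 ∪ 𝒜) (𝒯 ∪ 𝒟) s := by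
  obtain ⟨hsA, hsB, hsD⟩ : s.1 ∈ A ∧ s.2.1 ∈ B ∧ s.2.2 ∈ D := by
    simpa only [mem_product] using hs
  rw [tripleLabel_eq_iff, mem_product, mem_product, mem_iff_atomLabel_union_eq h𝒜 h𝒮 hA hsA,
    mem_iff_atomLabel_union_eq h𝒜 h𝒮 hB hsB, mem_iff_atomLabel_union_eq h𝒟 h𝒯 hD hsD]

theorem energy_add_pow_le_of_witnesses [Fintype V] [Fintype C] [Nonempty V] [Nonempty C]
    (he : 0 ≤ e) (h𝒜 : (𝒜 : Set (Finset V)).PairwiseDisjoint id)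
    (h𝒟 : (𝒟 : Set (Finset C)).PairwiseDisjoint id) (h𝒜m : (𝒜 : Set (Finset V)).Sized m)
    (h𝒟m : (𝒟 : Set (Finset C)).Sized m)
    (h𝒮 : ∀ A ∈ 𝒜, ∀ x ∈ A, ∀ y ∈ A, atomLabel 𝒮 x = atomLabel 𝒮 y)
    (h𝒯 : ∀ D ∈ 𝒟, ∀ c ∈ D, ∀ c' ∈ D, atomLabel 𝒯 c = atomLabel 𝒯 c')
    (hirr : e * Fintype.card V ^ 2 * Fintype.card C ≤ #(irregularTriples e G 𝒜 𝒟) * m ^ 3)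
    (h𝒮' : 𝒮 ∪ 𝒜 ⊆ 𝒮') (h𝒯' : 𝒯 ∪ 𝒟 ⊆ 𝒯')
    (hwit : ∀ t ∈ irregularTriples e G 𝒜 𝒟, ∃ A ⊆ t.1, ∃ B ⊆ t.2.1, ∃ D ⊆ t.2.2,
      (A ∈ 𝒮' ∧ B ∈ 𝒮' ∧ D ∈ 𝒯') ∧ e * #t.1 ≤ #A ∧ e * #t.2.1 ≤ #B ∧ e * #t.2.2 ≤ #D ∧
        e ≤ |colDensity G A B D - colDensity G t.1 t.2.1 t.2.2|) :
    energy (edgeIndicator G) (tripleLabel 𝒮 𝒯) + e ^ 6 ≤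
      energy (edgeIndicator G) (tripleLabel 𝒮' 𝒯') := by
  set I := irregularTriples e G 𝒜 𝒟
  have hI : I ⊆ 𝒜 ×ˢ 𝒜 ×ˢ 𝒟 := filter_subset _ _
  have hmem : ∀ t ∈ I, t.1 ∈ 𝒜 ∧ t.2.1 ∈ 𝒜 ∧ t.2.2 ∈ 𝒟 := fun t ht => by
    simpa only [mem_product] using hI ht
  choose! A hA B hB D hD hnew hAcard hBcard hDcard hdev using hwit
  have hincr := energy_add_le_energy_of_irregular (f := edgeIndicator G) (α := e ^ 3) he
    (tripleLabel_factorsThrough h𝒮' h𝒯')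
    (fun t ht ω hω => mem_box_iff_tripleLabel_eq h𝒜 h𝒟 h𝒮 h𝒯 (hmem t ht).1 (hmem t ht).2.1
      (hmem t ht).2.2 hω)
    ((pairwiseDisjoint_box h𝒜 h𝒟).subset (coe_subset.2 hI))
    (fun t ht => product_subset_product (hA t ht) (product_subset_product (hB t ht) (hD t ht)))
    (fun t ht => mem_box_factorsThrough_tripleLabel (hnew t ht).1 (hnew t ht).2.1 (hnew t ht).2.2)
    (fun t ht => ?_) fun t ht => ?_
  · refine le_trans ?_ ((add_le_add_left (energy_mono _ (tripleLabel_factorsThrough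
      (subset_union_left (s₂ := 𝒜)) (subset_union_left (s₂ := 𝒟)))) _).trans hincr)
    have hΩ : (0 : ℝ) < Fintype.card (V × V × C) := by exact_mod_cast Fintype.card_pos
    gcongr
    rw [le_div_iff₀ hΩ, ← Nat.cast_sum, sum_card_box h𝒜m h𝒟m hI]
    calc
      e ^ 6 * (Fintype.card (V × V × C) : ℝ)
        = e ^ 5 * (e * Fintype.card V ^ 2 * Fintype.card C) := by
          rw [Fintype.card_prod, Fintype.card_prod]
          push_cast
          ring
      _ ≤ e ^ 5 * (#I * m ^ 3) := by gcongr
      _ = e ^ 3 * e ^ 2 * ((#I * m ^ 3 : ℕ) : ℝ) := by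
          push_cast
          ring
  · simp only [card_product, Nat.cast_mul]
    calc
      e ^ 3 * (#t.1 * (#t.2.1 * #t.2.2) : ℝ) = (e * #t.1) * ((e * #t.2.1) * (e * #t.2.2)) := by ring
      _ ≤ _ := by
        gcongr
        exacts [hAcard t ht, hBcard t ht, hDcard t ht]
  · rw [expect_edgeIndicator, expect_edgeIndicator]
    exact hdev t ht

theorem exists_energy_increment [Fintype V] [Fintype C] [Nonempty V] [Nonempty C] (he : 0 ≤ e)
    (h𝒜 : (𝒜 : Set (Finset V)).PairwiseDisjoint id) (h𝒟 : (𝒟 : Set (Finset C)).PairwiseDisjoint id)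
    (h𝒜m : (𝒜 : Set (Finset V)).Sized m) (h𝒟m : (𝒟 : Set (Finset C)).Sized m)
    (h𝒮 : ∀ A ∈ 𝒜, ∀ x ∈ A, ∀ y ∈ A, atomLabel 𝒮 x = atomLabel 𝒮 y)
    (h𝒯 : ∀ D ∈ 𝒟, ∀ c ∈ D, ∀ c' ∈ D, atomLabel 𝒯 c = atomLabel 𝒯 c')
    (hirr : e * Fintype.card V ^ 2 * Fintype.card C ≤ #(irregularTriples e G 𝒜 𝒟) * m ^ 3) :
    ∃ (𝒮' : Finset (Finset V)) (𝒯' : Finset (Finset C)),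
      #𝒮' ≤ #𝒮 + #𝒜 + 2 * #(irregularTriples e G 𝒜 𝒟) ∧
      #𝒯' ≤ #𝒯 + #𝒟 + 2 * #(irregularTriples e G 𝒜 𝒟) ∧
      energy (edgeIndicator G) (tripleLabel 𝒮 𝒯) + e ^ 6 ≤
        energy (edgeIndicator G) (tripleLabel 𝒮' 𝒯') := by
  set I := irregularTriples e G 𝒜 𝒟
  choose! A hA B hB D hD hdev using fun t (ht : t ∈ I) =>
    exists_deviation_of_not_colReg_zero (mem_filter.1 ht).2
  refine ⟨(𝒮 ∪ 𝒜) ∪ (I.image A ∪ I.image B), (𝒯 ∪ 𝒟) ∪ I.image D, ?_, ?_,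
    energy_add_pow_le_of_witnesses he h𝒜 h𝒟 h𝒜m h𝒟m h𝒮 h𝒯 hirr subset_union_left
      subset_union_left fun t ht => ⟨A t, hA t ht, B t, hB t ht, D t, hD t ht, ⟨?_, ?_, ?_⟩,
        hdev t ht⟩⟩
  · calc
      _ ≤ #𝒮 + #𝒜 + (#(I.image A) + #(I.image B)) := by
        refine (card_union_le _ _).trans (add_le_add (card_union_le _ _) (card_union_le _ _))
      _ ≤ #𝒮 + #𝒜 + 2 * #I := by
        rw [two_mul]
        gcongr <;> exact card_image_le
  · calc
      _ ≤ #𝒯 + #𝒟 + #(I.image D) :=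
        (card_union_le _ _).trans (Nat.add_le_add_right (card_union_le _ _) _)
      _ ≤ #𝒯 + #𝒟 + 2 * #I := by
        gcongr
        exact card_image_le.trans (Nat.le_mul_of_pos_left _ two_pos)
  · exact mem_union_right _ (mem_union_left _ (mem_image_of_mem A ht))
  · exact mem_union_right _ (mem_union_right _ (mem_image_of_mem B ht))
  · exact mem_union_right _ (mem_image_of_mem D ht)

end Increment

section Regularity

universe u v

/-- The outcome of the regularity lemma: almost equipartitions of the vertices and of the colours
into clusters of a common size `m`, with few irregular triples of clusters (counted with weight
`m ^ 3`, the number of points of `V × V × C` in such a triple). -/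
structure IsRegularClustering {V C : Type*} [Fintype V] [Fintype C] (e η : ℝ)
    (G : C → SimpleGraph V) (𝒜 : Finset (Finset V)) (𝒟 : Finset (Finset C)) (m : ℕ) : Prop where
  vertices : IsAlmostEquipartition 𝒜 m (η * Fintype.card V)
  colours : IsAlmostEquipartition 𝒟 m (η * Fintype.card V)
  size_pos : 0 < m
  size_le : m ≤ η * Fintype.card V
  irregular_le : #(irregularTriples e G 𝒜 𝒟) * m ^ 3 ≤ e * Fintype.card V ^ 2 * Fintype.card C

theorem exists_isAlmostEquipartition_of_card_le {X : Type*} [Fintype X] {𝒮 : Finset (Finset X)}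
    {a m : ℕ} {ℓ : ℝ} (h𝒮 : #𝒮 ≤ a) (hm : 0 < m) (hℓ : 2 ^ a * m ≤ ℓ) :
    ∃ 𝒜 : Finset (Finset X), IsAlmostEquipartition 𝒜 m ℓ ∧
      ∀ A ∈ 𝒜, ∀ x ∈ A, ∀ y ∈ A, atomLabel 𝒮 x = atomLabel 𝒮 y := by
  obtain ⟨𝒜, h𝒜, hatom⟩ := exists_isAlmostEquipartition_monochromatic
    (p := atomLabel 𝒮) (t := 𝒮.powerset) (fun x => mem_powerset.2 (filter_subset _ _)) hm
  refine ⟨𝒜, ⟨h𝒜.sized, h𝒜.pairwiseDisjoint, h𝒜.card_uncovered_le.trans (hℓ.trans' ?_)⟩, hatom⟩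
  rw [card_powerset]
  push_cast
  gcongr
  norm_num

theorem IsAlmostEquipartition.card_le_of_le_mul {X : Type*} [Fintype X] {𝒜 : Finset (Finset X)}
    {m : ℕ} {ℓ k : ℝ} (h : IsAlmostEquipartition 𝒜 m ℓ) (hm : 0 < m)
    (hk : Fintype.card X ≤ k * m) : #𝒜 ≤ k := by
  refine le_of_mul_le_mul_right (hk.trans' ?_) (Nat.cast_pos.2 hm)
  exact_mod_cast h.card_mul_le

theorem exists_nat_between_half_and_self {x : ℝ} (hx : 1 ≤ x) :
    ∃ m : ℕ, 0 < m ∧ m ≤ x ∧ x ≤ 2 * m := by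
  have hpos : 0 < ⌊x⌋₊ := Nat.floor_pos.2 hx
  refine ⟨⌊x⌋₊, hpos, Nat.floor_le (by linarith), ?_⟩
  have hone : (1 : ℝ) ≤ ⌊x⌋₊ := by exact_mod_cast hpos
  linarith [Nat.lt_floor_add_one x]

theorem exists_isRegularClustering_or_energy_increment {V C : Type*} [Fintype V] [Fintype C]
    [Nonempty V] [Nonempty C] {e η b : ℝ} {a K : ℕ} (he : 0 < e) (hη : 0 < η) (hb : 1 ≤ b)
    (hK : 2 * 2 ^ a * b / η ≤ K) (G : C → SimpleGraph V) (hV : 2 ^ a ≤ η * Fintype.card V)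
    (hC : Fintype.card C ≤ b * Fintype.card V) {𝒮 : Finset (Finset V)} {𝒯 : Finset (Finset C)}
    (h𝒮 : #𝒮 ≤ a) (h𝒯 : #𝒯 ≤ a) :
    (∃ 𝒜 𝒟 m, IsRegularClustering e η G 𝒜 𝒟 m ∧ #𝒜 ≤ K ∧ #𝒟 ≤ K) ∨
      ∃ 𝒮' 𝒯', #𝒮' ≤ a + K + 2 * K ^ 3 ∧ #𝒯' ≤ a + K + 2 * K ^ 3 ∧
        energy (edgeIndicator G) (tripleLabel 𝒮 𝒯) + e ^ 6 ≤
          energy (edgeIndicator G) (tripleLabel 𝒮' 𝒯') := by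
  obtain ⟨m, hm, hm_le, hm_ge⟩ :=
    exists_nat_between_half_and_self ((one_le_div₀ (by positivity)).2 hV)
  rw [le_div_iff₀ (by positivity), mul_comm] at hm_le
  rw [div_le_iff₀ (by positivity)] at hm_ge
  obtain ⟨𝒜, h𝒜, hatom𝒜⟩ := exists_isAlmostEquipartition_of_card_le h𝒮 hm hm_le
  obtain ⟨𝒟, h𝒟, hatom𝒟⟩ := exists_isAlmostEquipartition_of_card_le h𝒯 hm hm_le
  have hbound : b * Fintype.card V ≤ K * m := by
    calc
      b * Fintype.card V = b / η * (η * Fintype.card V) := by field_simp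
      _ ≤ b / η * (2 * m * 2 ^ a) := by gcongr
      _ = 2 * 2 ^ a * b / η * m := by ring
      _ ≤ K * m := by gcongr
  have h𝒜K : #𝒜 ≤ K := by
    exact_mod_cast h𝒜.card_le_of_le_mul hm
      (hbound.trans' (le_mul_of_one_le_left (Nat.cast_nonneg _) hb))
  have h𝒟K : #𝒟 ≤ K := by
    exact_mod_cast h𝒟.card_le_of_le_mul hm (hC.trans hbound)
  rcases le_total (#(irregularTriples e G 𝒜 𝒟) * m ^ 3 : ℝ)
    (e * Fintype.card V ^ 2 * Fintype.card C) with hfew | hmany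
  · refine .inl ⟨𝒜, 𝒟, m, ⟨h𝒜, h𝒟, hm, hm_le.trans' ?_, hfew⟩, h𝒜K, h𝒟K⟩
    exact le_mul_of_one_le_left (Nat.cast_nonneg m) (one_le_pow₀ one_le_two)
  · obtain ⟨𝒮', 𝒯', h𝒮', h𝒯', henergy⟩ := exists_energy_increment he.le h𝒜.pairwiseDisjoint
      h𝒟.pairwiseDisjoint h𝒜.sized h𝒟.sized hatom𝒜 hatom𝒟 hmany
    have hirr : #(irregularTriples e G 𝒜 𝒟) ≤ K ^ 3 := by
      refine (card_le_card (filter_subset _ _)).trans ?_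
      rw [card_product, card_product, pow_three]
      gcongr
    exact .inr ⟨𝒮', 𝒯', by linarith, by linarith, henergy⟩

theorem exists_isRegularClustering_of_lt_energy_add {e η b : ℝ} (he : 0 < e) (hη : 0 < η)
    (hb : 1 ≤ b) (k a : ℕ) :
    ∃ K : ℕ, ∀ (V : Type u) (C : Type v) [Fintype V] [Fintype C] [Nonempty V] [Nonempty C]
      (G : C → SimpleGraph V) (𝒮 : Finset (Finset V)) (𝒯 : Finset (Finset C)),
      K ≤ Fintype.card V → Fintype.card C ≤ b * Fintype.card V → #𝒮 ≤ a → #𝒯 ≤ a →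
      1 < energy (edgeIndicator G) (tripleLabel 𝒮 𝒯) + k * e ^ 6 →
      ∃ 𝒜 𝒟 m, IsRegularClustering e η G 𝒜 𝒟 m ∧ #𝒜 ≤ K ∧ #𝒟 ≤ K := by
  induction k generalizing a with
  | zero =>
    refine ⟨0, fun V C _ _ _ _ G 𝒮 𝒯 _ _ _ _ hlt => absurd hlt (not_lt.2 ?_)⟩
    rw [Nat.cast_zero, zero_mul, add_zero]
    refine energy_le_one (fun t => ?_) (fun t => ?_) _ <;> unfold edgeIndicator <;>
      split_ifs <;> norm_num
  | succ k ih =>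
    set K₁ := ⌈2 * 2 ^ a * b / η⌉₊
    obtain ⟨K₂, hK₂⟩ := ih (a + K₁ + 2 * K₁ ^ 3)
    refine ⟨max ⌈2 ^ a / η⌉₊ (max K₁ K₂), fun V C _ _ _ _ G 𝒮 𝒯 hV hC h𝒮 h𝒯 hlt => ?_⟩
    have hV₁ : 2 ^ a ≤ η * Fintype.card V := by
      rw [← div_le_iff₀' hη]
      exact (Nat.le_ceil _).trans (Nat.cast_le.2 ((le_max_left _ _).trans hV))
    rcases exists_isRegularClustering_or_energy_increment he hη hb (Nat.le_ceil _) G hV₁ hC h𝒮 h𝒯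
      with ⟨𝒜, 𝒟, m, hreg, h𝒜, h𝒟⟩ | ⟨𝒮', 𝒯', h𝒮', h𝒯', hincr⟩
    · have hK₁ : K₁ ≤ max ⌈2 ^ a / η⌉₊ (max K₁ K₂) := by simp
      exact ⟨𝒜, 𝒟, m, hreg, h𝒜.trans hK₁, h𝒟.trans hK₁⟩
    · have hK₂' : K₂ ≤ max ⌈2 ^ a / η⌉₊ (max K₁ K₂) := by simp
      push_cast at hlt
      obtain ⟨𝒜, 𝒟, m, hreg, h𝒜, h𝒟⟩ :=
        hK₂ V C G 𝒮' 𝒯' (hK₂'.trans hV) hC h𝒮' h𝒯' (by linarith)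
      exact ⟨𝒜, 𝒟, m, hreg, h𝒜.trans hK₂', h𝒟.trans hK₂'⟩

theorem exists_isRegularClustering {e η b : ℝ} (he : 0 < e) (hη : 0 < η) (hb : 1 ≤ b) :
    ∃ K : ℕ, ∀ (V : Type u) (C : Type v) [Fintype V] [Fintype C] [Nonempty V] [Nonempty C]
      (G : C → SimpleGraph V), K ≤ Fintype.card V → Fintype.card C ≤ b * Fintype.card V →
      ∃ 𝒜 𝒟 m, IsRegularClustering e η G 𝒜 𝒟 m ∧ #𝒜 ≤ K ∧ #𝒟 ≤ K := by
  obtain ⟨k, hk⟩ := exists_nat_gt (1 / e ^ 6)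
  rw [div_lt_iff₀ (by positivity)] at hk
  obtain ⟨K, hK⟩ := exists_isRegularClustering_of_lt_energy_add he hη hb k 0
  refine ⟨K, fun V C _ _ _ _ G hV hC => hK V C G ∅ ∅ hV hC card_empty.le card_empty.le ?_⟩
  linarith [energy_nonneg (edgeIndicator G) (tripleLabel ∅ ∅)]

end Regularity

section Exceptional

theorem exists_exceptional_set {ι X : Type*} (T : Finset ι) {cl : ι → Finset X}
    {w : ι → X → ℝ} {M τ θ : ℝ} (hM : 0 ≤ M) (hτ : 0 ≤ τ) (hθ : 0 ≤ θ)
    (hw : ∀ t ∈ T, ∀ x ∈ cl t, w t x ≤ M) :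
    ∃ B : Finset X, #B * θ ≤ M * ∑ t ∈ T, (#{x ∈ cl t | τ < w t x} : ℝ) ∧
      ∀ x ∉ B, ∑ t ∈ T with x ∈ cl t, w t x ≤ θ + τ * #{t ∈ T | x ∈ cl t} := by
  let heavy (x : X) : Finset ι := {t ∈ T | x ∈ cl t ∧ τ < w t x}
  let B : Finset X := {x ∈ T.biUnion cl | θ < M * #(heavy x)}
  have hcount : ∑ x ∈ B, #(heavy x) ≤ ∑ t ∈ T, #{x ∈ cl t | τ < w t x} := by
    refine (sum_card_bipartiteAbove_eq_sum_card_bipartiteBelow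
      fun x t => x ∈ cl t ∧ τ < w t x).trans_le (sum_le_sum fun t _ => card_le_card fun _ hx => ?_)
    exact mem_filter.2 (mem_filter.1 hx).2
  refine ⟨B, ?_, fun x hx => ?_⟩
  · calc
      #B * θ = ∑ _ ∈ B, θ := by rw [sum_const, nsmul_eq_mul]
      _ ≤ ∑ x ∈ B, M * (#(heavy x) : ℝ) := sum_le_sum fun x hx => (mem_filter.1 hx).2.le
      _ ≤ M * ∑ t ∈ T, (#{x ∈ cl t | τ < w t x} : ℝ) := by
        rw [← mul_sum]
        gcongr
        exact_mod_cast hcount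
  · by_cases hx_cover : x ∈ T.biUnion cl
    · have hlight : M * #(heavy x) ≤ θ := not_lt.1 fun h => hx (mem_filter.2 ⟨hx_cover, h⟩)
      calc
        ∑ t ∈ T with x ∈ cl t, w t x ≤
            ∑ t ∈ T with x ∈ cl t, ((if τ < w t x then M else 0) + τ) :=
          sum_le_sum fun t ht => by
            have := hw t (mem_filter.1 ht).1 x (mem_filter.1 ht).2
            split_ifs <;> linarith
        _ = M * #(heavy x) + τ * #{t ∈ T | x ∈ cl t} := by
          rw [sum_add_distrib, sum_const, ← sum_filter, filter_filter, sum_const, nsmul_eq_mul,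
            nsmul_eq_mul, mul_comm M, mul_comm τ]
        _ ≤ θ + τ * #{t ∈ T | x ∈ cl t} := by gcongr
    · rw [filter_false_of_mem fun t ht hxt => hx_cover (mem_biUnion.2 ⟨t, ht, hxt⟩)]
      simpa using hθ

theorem card_filter_mem_le {ι X Y : Type*} {𝒜 : Finset (Finset X)} {T : Finset ι} {S : Finset Y}
    {cl : ι → Finset X} {rest : ι → Y} {x : X} (h𝒜 : (𝒜 : Set (Finset X)).PairwiseDisjoint id)
    (hcl : ∀ t ∈ T, cl t ∈ 𝒜) (hrest : ∀ t ∈ T, rest t ∈ S)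
    (hinj : ∀ s t, cl s = cl t → rest s = rest t → s = t) :
    #{t ∈ T | x ∈ cl t} ≤ #S := by
  refine card_le_card_of_injOn rest (fun t ht => hrest t (mem_filter.1 ht).1)
    fun s hs t ht hst => ?_
  obtain ⟨hs, hxs⟩ := mem_filter.1 hs
  obtain ⟨ht, hxt⟩ := mem_filter.1 ht
  exact hinj s t (h𝒜.elim_finset (hcl s hs) (hcl t ht) x hxs hxt) hst

variable {V C : Type*} {G : C → SimpleGraph V} {A A' B B' : Finset V} {D D' : Finset C}
  {𝒜 : Finset (Finset V)} {𝒟 : Finset (Finset C)} {e d η θ : ℝ} {m : ℕ}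

theorem pairCount_eq_sum_degIn (H : SimpleGraph V) (A B : Finset V) :
    pairCount H A B = ∑ v ∈ A, degIn H v B := by
  simp only [pairCount, degIn, card_filter, sum_product]

theorem colDensity_mul_card (G : C → SimpleGraph V) (A B : Finset V) (D : Finset C) :
    colDensity G A B D * (#D * #A * #B) = ∑ c ∈ D, (pairCount (G c) A B : ℝ) := by
  refine div_mul_cancel_of_imp fun h => sum_eq_zero fun c hc => ?_
  have hAB : #A * #B = 0 := by
    rw [mul_assoc, mul_eq_zero_iff_left (by exact_mod_cast card_ne_zero_of_mem hc)] at h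
    exact_mod_cast h
  exact_mod_cast Nat.le_zero.1 ((pairCount_le_card_mul_card (G c) A B).trans_eq hAB)

theorem sum_pairCount_le_of_sparse (hreg : ColReg e 0 G A B D)
    (hsparse : ¬ ColReg e (d + e) G A B D) (hA : A' ⊆ A) (hB : B' ⊆ B) (hD : D' ⊆ D)
    (hA_card : e * #A ≤ #A') (hB_card : e * #B ≤ #B') (hD_card : e * #D ≤ #D') :
    ∑ c ∈ D', (pairCount (G c) A' B' : ℝ) ≤ (d + 2 * e) * (#D' * #A' * #B') := by
  have hdens : colDensity G A B D < d + e := by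
    by_contra! h
    exact hsparse ⟨h, hreg.2⟩
  rw [← colDensity_mul_card]
  gcongr
  linarith [(abs_lt.1 (hreg.2 A' hA B' hB D' hD hA_card hB_card hD_card)).2]

theorem card_heavy_vertices_le (he₀ : 0 ≤ e) (he₁ : e ≤ 1) (hreg : ColReg e 0 G A B D)
    (hsparse : ¬ ColReg e (d + e) G A B D) :
    #{v ∈ A | (d + 2 * e) * (#D * #B) < ∑ c ∈ D, (degIn (G c) v B : ℝ)} ≤ e * #A := by
  set S := {v ∈ A | (d + 2 * e) * (#D * #B) < ∑ c ∈ D, (degIn (G c) v B : ℝ)}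
  by_contra! hlarge
  have hS_pos : (0 : ℝ) < #S := hlarge.trans_le' (by positivity)
  have hS : S.Nonempty := card_pos.1 (by exact_mod_cast hS_pos)
  refine (sum_pairCount_le_of_sparse hreg hsparse (filter_subset _ _) subset_rfl subset_rfl
    hlarge.le (mul_le_of_le_one_left (Nat.cast_nonneg _) he₁)
    (mul_le_of_le_one_left (Nat.cast_nonneg _) he₁)).not_gt ?_
  calc
    (d + 2 * e) * (#D * #S * #B) = ∑ v ∈ S, (d + 2 * e) * (#D * #B : ℝ) := by
      rw [sum_const, nsmul_eq_mul]
      ring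
    _ < ∑ v ∈ S, ∑ c ∈ D, (degIn (G c) v B : ℝ) :=
      sum_lt_sum_of_nonempty hS fun v hv => (mem_filter.1 hv).2
    _ = ∑ c ∈ D, (pairCount (G c) S B : ℝ) := by
      rw [sum_comm]
      exact sum_congr rfl fun c _ => by rw [pairCount_eq_sum_degIn, Nat.cast_sum]

theorem card_heavy_colours_le (he₀ : 0 ≤ e) (he₁ : e ≤ 1) (hreg : ColReg e 0 G A B D)
    (hsparse : ¬ ColReg e (d + e) G A B D) :
    #{c ∈ D | (d + 2 * e) * (#A * #B) < pairCount (G c) A B} ≤ e * #D := by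
  set S := {c ∈ D | (d + 2 * e) * (#A * #B) < pairCount (G c) A B}
  by_contra! hlarge
  have hS_pos : (0 : ℝ) < #S := hlarge.trans_le' (by positivity)
  have hS : S.Nonempty := card_pos.1 (by exact_mod_cast hS_pos)
  refine (sum_pairCount_le_of_sparse hreg hsparse subset_rfl subset_rfl (filter_subset _ _)
    (mul_le_of_le_one_left (Nat.cast_nonneg _) he₁)
    (mul_le_of_le_one_left (Nat.cast_nonneg _) he₁) hlarge.le).not_gt ?_
  calc
    (d + 2 * e) * (#S * #A * #B) = ∑ c ∈ S, (d + 2 * e) * (#A * #B : ℝ) := by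
      rw [sum_const, nsmul_eq_mul]
      ring
    _ < ∑ c ∈ S, (pairCount (G c) A B : ℝ) :=
      sum_lt_sum_of_nonempty hS fun c hc => (mem_filter.1 hc).2

/-- The triples of clusters whose edges are removed: those with both vertex clusters equal and those
failing to be `(e, d + e)`-regular. The slack `e` in the density leaves room for passing to
subclusters. -/
noncomputable def badTriples (e d : ℝ) (G : C → SimpleGraph V) (𝒜 : Finset (Finset V))
    (𝒟 : Finset (Finset C)) : Finset (Finset V × Finset V × Finset C) :=
  {t ∈ 𝒜 ×ˢ 𝒜 ×ˢ 𝒟 | t.1 = t.2.1 ∨ ¬ ColReg e (d + e) G t.1 t.2.1 t.2.2}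

theorem mem_of_mem_badTriples {t : Finset V × Finset V × Finset C}
    (ht : t ∈ badTriples e d G 𝒜 𝒟) : t.1 ∈ 𝒜 ∧ t.2.1 ∈ 𝒜 ∧ t.2.2 ∈ 𝒟 := by
  simpa only [mem_product] using (mem_filter.1 ht).1

theorem card_diagonal_triples_le (𝒜 : Finset (Finset V)) (𝒟 : Finset (Finset C)) :
    #{t ∈ 𝒜 ×ˢ 𝒜 ×ˢ 𝒟 | t.1 = t.2.1} ≤ #𝒜 * #𝒟 := by
  rw [← card_product]
  refine card_le_card_of_injOn Prod.snd (fun t ht => ?_) fun s hs t ht hst => ?_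
  · exact (mem_product.1 (mem_filter.1 ht).1).2
  · have h₁ : s.1 = s.2.1 := (mem_filter.1 hs).2
    have h₂ : t.1 = t.2.1 := (mem_filter.1 ht).2
    exact Prod.ext (by rw [h₁, h₂, hst]) hst

theorem sum_badTriples_le {M : ℝ} (he : 0 ≤ e) (hM : 0 ≤ M)
    {F : Finset V × Finset V × Finset C → ℝ} (hF : ∀ t ∈ badTriples e d G 𝒜 𝒟, F t ≤ M)
    (hF_reg : ∀ t ∈ badTriples e d G 𝒜 𝒟, t.1 ≠ t.2.1 → ColReg e 0 G t.1 t.2.1 t.2.2 →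
      F t ≤ e * M) :
    ∑ t ∈ badTriples e d G 𝒜 𝒟, F t ≤
      #(𝒜 ×ˢ 𝒜 ×ˢ 𝒟) * (e * M) + #𝒜 * #𝒟 * M + #(irregularTriples e G 𝒜 𝒟) * M := by
  have hdiag : (#{t ∈ 𝒜 ×ˢ 𝒜 ×ˢ 𝒟 | t.1 = t.2.1} : ℝ) ≤ #𝒜 * #𝒟 := by
    exact_mod_cast card_diagonal_triples_le 𝒜 𝒟
  have heM : 0 ≤ e * M := by positivity
  calc
    ∑ t ∈ badTriples e d G 𝒜 𝒟, F t ≤ ∑ t ∈ badTriples e d G 𝒜 𝒟, (e * M +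
        (if t.1 = t.2.1 then M else 0) + if ¬ ColReg e 0 G t.1 t.2.1 t.2.2 then M else 0) := by
      refine sum_le_sum fun t ht => ?_
      have := hF t ht
      have := hF_reg t ht
      split_ifs <;> grind
    _ ≤ ∑ t ∈ 𝒜 ×ˢ 𝒜 ×ˢ 𝒟, (e * M + (if t.1 = t.2.1 then M else 0) +
        if ¬ ColReg e 0 G t.1 t.2.1 t.2.2 then M else 0) :=
      sum_le_sum_of_subset_of_nonneg (filter_subset _ _) fun t _ _ => by positivity
    _ = #(𝒜 ×ˢ 𝒜 ×ˢ 𝒟) * (e * M) + #{t ∈ 𝒜 ×ˢ 𝒜 ×ˢ 𝒟 | t.1 = t.2.1} * M +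
        #(irregularTriples e G 𝒜 𝒟) * M := by
      simp only [sum_add_distrib, sum_const, ← sum_filter, nsmul_eq_mul, irregularTriples]
    _ ≤ _ := by gcongr

variable [Fintype V] [Fintype C]

theorem IsRegularClustering.sq_mul_sum_badTriples_le (h : IsRegularClustering e η G 𝒜 𝒟 m)
    (he : 0 ≤ e) {F : Finset V × Finset V × Finset C → ℝ}
    (hF : ∀ t ∈ badTriples e d G 𝒜 𝒟, F t ≤ m)
    (hF_reg : ∀ t ∈ badTriples e d G 𝒜 𝒟, t.1 ≠ t.2.1 → ColReg e 0 G t.1 t.2.1 t.2.2 →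
      F t ≤ e * m) :
    m ^ 2 * ∑ t ∈ badTriples e d G 𝒜 𝒟, F t ≤
      (2 * e + η) * (Fintype.card V ^ 2 * Fintype.card C) := by
  have hV : (#𝒜 * m : ℝ) ≤ Fintype.card V := by exact_mod_cast h.vertices.card_mul_le
  have hC : (#𝒟 * m : ℝ) ≤ Fintype.card C := by exact_mod_cast h.colours.card_mul_le
  have hm : (m : ℝ) ≤ η * Fintype.card V := h.size_le
  have hηV : 0 ≤ η * Fintype.card V := hm.trans' (Nat.cast_nonneg m)
  calc
    m ^ 2 * ∑ t ∈ badTriples e d G 𝒜 𝒟, F t ≤ m ^ 2 * (#(𝒜 ×ˢ 𝒜 ×ˢ 𝒟) * (e * m) +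
        #𝒜 * #𝒟 * m + #(irregularTriples e G 𝒜 𝒟) * m) := by
      gcongr
      exact sum_badTriples_le he (Nat.cast_nonneg m) hF hF_reg
    _ = e * ((#𝒜 * m) ^ 2 * (#𝒟 * m)) + m * ((#𝒜 * m) * (#𝒟 * m)) +
        #(irregularTriples e G 𝒜 𝒟) * m ^ 3 := by
      rw [card_product, card_product]
      push_cast
      ring
    _ ≤ e * (Fintype.card V ^ 2 * Fintype.card C) +
        η * Fintype.card V * (Fintype.card V * Fintype.card C) +
        e * Fintype.card V ^ 2 * Fintype.card C := by
      gcongr ?_ + ?_ + ?_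
      · gcongr
      · gcongr
      · exact h.irregular_le
    _ = _ := by ring

theorem IsRegularClustering.exists_exceptional [Nonempty V] (h : IsRegularClustering e η G 𝒜 𝒟 m)
    (he : 0 ≤ e) (hd : 0 ≤ d) (hθ : 0 ≤ θ) {X : Type*}
    {cl : Finset V × Finset V × Finset C → Finset X}
    {w : Finset V × Finset V × Finset C → X → ℝ}
    (hcl : ∀ t ∈ badTriples e d G 𝒜 𝒟, #(cl t) = m)
    (hw : ∀ t ∈ badTriples e d G 𝒜 𝒟, ∀ x ∈ cl t, w t x ≤ m ^ 2)
    (hw_reg : ∀ t ∈ badTriples e d G 𝒜 𝒟, t.1 ≠ t.2.1 → ColReg e 0 G t.1 t.2.1 t.2.2 →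
      #{x ∈ cl t | (d + 2 * e) * m ^ 2 < w t x} ≤ e * m) :
    ∃ B : Finset X, #B * θ ≤ (2 * e + η) * Fintype.card C ∧
      ∀ x ∉ B, ∑ t ∈ badTriples e d G 𝒜 𝒟 with x ∈ cl t, w t x ≤
        θ * Fintype.card V ^ 2 +
          (d + 2 * e) * m ^ 2 * #{t ∈ badTriples e d G 𝒜 𝒟 | x ∈ cl t} := by
  obtain ⟨B, hB, hloss⟩ := exists_exceptional_set (badTriples e d G 𝒜 𝒟) (M := m ^ 2)
    (τ := (d + 2 * e) * m ^ 2) (θ := θ * Fintype.card V ^ 2) (by positivity) (by positivity)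
    (by positivity) hw
  have hheavy := h.sq_mul_sum_badTriples_le he (d := d)
    (F := fun t => #{x ∈ cl t | (d + 2 * e) * m ^ 2 < w t x})
    (fun t ht => by
      rw [← hcl t ht]
      exact_mod_cast card_filter_le _ _) hw_reg
  refine ⟨B, le_of_mul_le_mul_right (a := (Fintype.card V : ℝ) ^ 2) ?_ (by positivity), hloss⟩
  linarith

theorem IsRegularClustering.exists_exceptional_vertices [Nonempty V]
    (h : IsRegularClustering e η G 𝒜 𝒟 m) (he₀ : 0 ≤ e) (he₁ : e ≤ 1) (hd : 0 ≤ d) (hθ : 0 ≤ θ) :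
    ∃ B : Finset V, #B * θ ≤ (2 * e + η) * Fintype.card C ∧
      ∀ v ∉ B, ∑ t ∈ badTriples e d G 𝒜 𝒟 with v ∈ t.1, ∑ c ∈ t.2.2, (degIn (G c) v t.2.1 : ℝ) ≤
        θ * Fintype.card V ^ 2 + (d + 2 * e) * (Fintype.card V * Fintype.card C) := by
  obtain ⟨B, hB, hloss⟩ := h.exists_exceptional he₀ hd hθ (cl := Prod.fst)
    (w := fun t v => ∑ c ∈ t.2.2, (degIn (G c) v t.2.1 : ℝ))
    (fun t ht => h.vertices.sized (mem_of_mem_badTriples ht).1)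
    (fun t ht v _ => by
      calc
        ∑ c ∈ t.2.2, (degIn (G c) v t.2.1 : ℝ) ≤ ∑ _ ∈ t.2.2, (#t.2.1 : ℝ) :=
          sum_le_sum fun c _ => by exact_mod_cast card_filter_le _ _
        _ = m ^ 2 := by
          rw [sum_const, nsmul_eq_mul, h.vertices.sized (mem_of_mem_badTriples ht).2.1,
            h.colours.sized (mem_of_mem_badTriples ht).2.2, sq])
    fun t ht hne hreg => by
      have := card_heavy_vertices_le he₀ he₁ hreg ((mem_filter.1 ht).2.resolve_left hne)
      rwa [h.vertices.sized (mem_of_mem_badTriples ht).1,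
        h.vertices.sized (mem_of_mem_badTriples ht).2.1,
        h.colours.sized (mem_of_mem_badTriples ht).2.2, ← sq] at this
  refine ⟨B, hB, fun v hv => (hloss v hv).trans ?_⟩
  have hcount : #{t ∈ badTriples e d G 𝒜 𝒟 | v ∈ t.1} ≤ #(𝒜 ×ˢ 𝒟) :=
    card_filter_mem_le h.vertices.pairwiseDisjoint (rest := Prod.snd)
      (fun t ht => (mem_of_mem_badTriples ht).1)
      (fun t ht => mem_product.2 (mem_of_mem_badTriples ht).2) fun _ _ => Prod.ext
  have hV : (#𝒜 * m : ℝ) ≤ Fintype.card V := by exact_mod_cast h.vertices.card_mul_le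
  have hC : (#𝒟 * m : ℝ) ≤ Fintype.card C := by exact_mod_cast h.colours.card_mul_le
  calc
    θ * Fintype.card V ^ 2 + (d + 2 * e) * m ^ 2 * #{t ∈ badTriples e d G 𝒜 𝒟 | v ∈ t.1} ≤
        θ * Fintype.card V ^ 2 + (d + 2 * e) * m ^ 2 * #(𝒜 ×ˢ 𝒟) := by gcongr
    _ = θ * Fintype.card V ^ 2 + (d + 2 * e) * ((#𝒜 * m) * (#𝒟 * m)) := by
      rw [card_product]
      push_cast
      ring
    _ ≤ _ := by gcongr

theorem IsRegularClustering.exists_exceptional_colours [Nonempty V]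
    (h : IsRegularClustering e η G 𝒜 𝒟 m) (he₀ : 0 ≤ e) (he₁ : e ≤ 1) (hd : 0 ≤ d) (hθ : 0 ≤ θ) :
    ∃ B : Finset C, #B * θ ≤ (2 * e + η) * Fintype.card C ∧
      ∀ c ∉ B, ∑ t ∈ badTriples e d G 𝒜 𝒟 with c ∈ t.2.2, (pairCount (G c) t.1 t.2.1 : ℝ) ≤
        θ * Fintype.card V ^ 2 + (d + 2 * e) * Fintype.card V ^ 2 := by
  obtain ⟨B, hB, hloss⟩ := h.exists_exceptional he₀ hd hθ (cl := fun t => t.2.2)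
    (w := fun t c => (pairCount (G c) t.1 t.2.1 : ℝ))
    (fun t ht => h.colours.sized (mem_of_mem_badTriples ht).2.2)
    (fun t ht c _ => by
      have := pairCount_le_card_mul_card (G c) t.1 t.2.1
      rw [h.vertices.sized (mem_of_mem_badTriples ht).1,
        h.vertices.sized (mem_of_mem_badTriples ht).2.1, ← sq] at this
      exact_mod_cast this)
    fun t ht hne hreg => by
      have := card_heavy_colours_le he₀ he₁ hreg ((mem_filter.1 ht).2.resolve_left hne)
      rwa [h.vertices.sized (mem_of_mem_badTriples ht).1,
        h.vertices.sized (mem_of_mem_badTriples ht).2.1,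
        h.colours.sized (mem_of_mem_badTriples ht).2.2, ← sq] at this
  refine ⟨B, hB, fun c hc => (hloss c hc).trans ?_⟩
  have hcount : #{t ∈ badTriples e d G 𝒜 𝒟 | c ∈ t.2.2} ≤ #(𝒜 ×ˢ 𝒜) :=
    card_filter_mem_le h.colours.pairwiseDisjoint (rest := fun t => (t.1, t.2.1))
      (fun t ht => (mem_of_mem_badTriples ht).2.2)
      (fun t ht => mem_product.2 ⟨(mem_of_mem_badTriples ht).1, (mem_of_mem_badTriples ht).2.1⟩)
      fun _ _ hcl hrest =>
        Prod.ext (Prod.ext_iff.1 hrest).1 (Prod.ext (Prod.ext_iff.1 hrest).2 hcl)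
  have hV : (#𝒜 * m : ℝ) ≤ Fintype.card V := by exact_mod_cast h.vertices.card_mul_le
  calc
    θ * Fintype.card V ^ 2 + (d + 2 * e) * m ^ 2 * #{t ∈ badTriples e d G 𝒜 𝒟 | c ∈ t.2.2} ≤
        θ * Fintype.card V ^ 2 + (d + 2 * e) * m ^ 2 * #(𝒜 ×ˢ 𝒜) := by gcongr
    _ = θ * Fintype.card V ^ 2 + (d + 2 * e) * (#𝒜 * m) ^ 2 := by
      rw [card_product]
      push_cast
      ring
    _ ≤ _ := by gcongr

end Exceptional

section Cleaning

variable {V C : Type*} {G G' : C → SimpleGraph V} {A A' B B' : Finset V} {D D' : Finset C}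
  {𝒜 𝒱 : Finset (Finset V)} {𝒟 𝒞 : Finset (Finset C)} {α e d ε : ℝ}

theorem ColReg.slice (h : ColReg e (d + e) G A B D) (he : 0 ≤ e) (hαe : α * e ≤ 1)
    (hαε : α * e ≤ ε) (hε : 2 * e ≤ ε) (hA : A' ⊆ A) (hB : B' ⊆ B) (hD : D' ⊆ D)
    (hA_card : #A ≤ α * #A') (hB_card : #B ≤ α * #B') (hD_card : #D ≤ α * #D') :
    ColReg ε d G A' B' D' := by
  have hlarge {p q r x : ℝ} (hpq : p ≤ α * q) (hq : 0 ≤ q) (hx : α * e ≤ x) (hr : x * q ≤ r) :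
      e * p ≤ r := by
    calc
      e * p ≤ e * (α * q) := by gcongr
      _ = α * e * q := by ring
      _ ≤ r := hr.trans' (by gcongr)
  have hslice := h.2 A' hA B' hB D' hD (hlarge hA_card (by positivity) hαe (one_mul _).le)
    (hlarge hB_card (by positivity) hαe (one_mul _).le)
    (hlarge hD_card (by positivity) hαe (one_mul _).le)
  refine ⟨by linarith [h.1, (abs_lt.1 hslice).1], fun A₁ hA₁ B₁ hB₁ D₁ hD₁ hA₁_card hB₁_card
    hD₁_card => ?_⟩
  have hsub := h.2 A₁ (hA₁.trans hA) B₁ (hB₁.trans hB) D₁ (hD₁.trans hD)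
    (hlarge hA_card (by positivity) hαε hA₁_card) (hlarge hB_card (by positivity) hαε hB₁_card)
    (hlarge hD_card (by positivity) hαε hD₁_card)
  rw [abs_lt] at *
  constructor <;> linarith

/-- The cleaned graph collection: for clusters `A`, `B` of `𝒱` and `D` of `𝒞`, the edges between `A`
and `B` in the colours of `D` are deleted from `G` if `A = B` or if they do not form an
`(ε, d)`-regular collection. Edges at uncovered vertices or in uncovered colours are kept. -/
def cleanGraph (ε d : ℝ) (G : C → SimpleGraph V) (𝒱 : Finset (Finset V)) (𝒞 : Finset (Finset C))
    (c : C) : SimpleGraph V where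
  Adj x y := (G c).Adj x y ∧ ∀ A ∈ 𝒱, ∀ B ∈ 𝒱, ∀ D ∈ 𝒞, x ∈ A → y ∈ B → c ∈ D →
    A ≠ B ∧ ColReg ε d G A B D
  symm := ⟨fun _ _ h => ⟨h.1.symm, fun A hA B hB D hD hx hy hc =>
    ⟨(h.2 B hB A hA D hD hy hx hc).1.symm, (h.2 B hB A hA D hD hy hx hc).2.symm⟩⟩⟩
  loopless := ⟨fun _ h => (G c).irrefl h.1⟩

theorem cleanGraph_le (c : C) : cleanGraph ε d G 𝒱 𝒞 c ≤ G c := fun _ _ h => h.1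

theorem not_cleanGraph_adj_of_mem (hA : A ∈ 𝒱) (hD : D ∈ 𝒞) {x y : V} {c : C} (hx : x ∈ A)
    (hy : y ∈ A) (hc : c ∈ D) : ¬ (cleanGraph ε d G 𝒱 𝒞 c).Adj x y := fun h =>
  (h.2 A hA A hA D hD hx hy hc).1 rfl

theorem cleanGraph_adj_iff_of_colReg (h𝒱 : (𝒱 : Set (Finset V)).PairwiseDisjoint id)
    (h𝒞 : (𝒞 : Set (Finset C)).PairwiseDisjoint id) (hA : A ∈ 𝒱) (hB : B ∈ 𝒱) (hD : D ∈ 𝒞)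
    (hAB : A ≠ B) (hreg : ColReg ε d G A B D) {x y : V} {c : C} (hx : x ∈ A) (hy : y ∈ B)
    (hc : c ∈ D) : (cleanGraph ε d G 𝒱 𝒞 c).Adj x y ↔ (G c).Adj x y := by
  refine ⟨fun h => h.1, fun h => ⟨h, fun A' hA' B' hB' D' hD' hx' hy' hc' => ?_⟩⟩
  rw [h𝒱.elim_finset hA' hA x hx' hx, h𝒱.elim_finset hB' hB y hy' hy,
    h𝒞.elim_finset hD' hD c hc' hc]
  exact ⟨hAB, hreg⟩

theorem pairCount_cleanGraph_eq_zero_or_colReg (h𝒱 : (𝒱 : Set (Finset V)).PairwiseDisjoint id)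
    (h𝒞 : (𝒞 : Set (Finset C)).PairwiseDisjoint id) (hA : A ∈ 𝒱) (hB : B ∈ 𝒱) (hD : D ∈ 𝒞)
    (hAB : A ≠ B) :
    (∀ c ∈ D, pairCount (cleanGraph ε d G 𝒱 𝒞 c) A B = 0) ∨
      ColReg ε d (cleanGraph ε d G 𝒱 𝒞) A B D := by
  by_cases hreg : ColReg ε d G A B D
  · exact Or.inr (hreg.congr fun c hc x hx y hy =>
      (cleanGraph_adj_iff_of_colReg h𝒱 h𝒞 hA hB hD hAB hreg hx hy hc).symm)
  · refine Or.inl fun c hc => card_eq_zero.2 (filter_eq_empty_iff.2 fun p hp hadj => hreg ?_)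
    exact (hadj.2 A hA B hB D hD (mem_product.1 hp).1 (mem_product.1 hp).2 hc).2

theorem exists_badTriple_of_not_cleanGraph_adj (he : 0 ≤ e) (hαe : α * e ≤ 1) (hαε : α * e ≤ ε)
    (hε : 2 * e ≤ ε) (h𝒜 : (𝒜 : Set (Finset V)).PairwiseDisjoint id)
    (h𝒱 : ∀ A' ∈ 𝒱, ∃ A ∈ 𝒜, A' ⊆ A ∧ #A ≤ α * #A')
    (h𝒞 : ∀ D' ∈ 𝒞, ∃ D ∈ 𝒟, D' ⊆ D ∧ #D ≤ α * #D') {c : C} {x y : V} (hadj : (G c).Adj x y)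
    (hclean : ¬ (cleanGraph ε d G 𝒱 𝒞 c).Adj x y) :
    x ∈ 𝒱.biUnion id ∧ c ∈ 𝒞.biUnion id ∧
      ∃ t ∈ badTriples e d G 𝒜 𝒟, x ∈ t.1 ∧ y ∈ t.2.1 ∧ c ∈ t.2.2 := by
  obtain ⟨A', hA', B', hB', D', hD', hx, hy, hc, hbad⟩ : ∃ A' ∈ 𝒱, ∃ B' ∈ 𝒱, ∃ D' ∈ 𝒞,
      x ∈ A' ∧ y ∈ B' ∧ c ∈ D' ∧ ¬ (A' ≠ B' ∧ ColReg ε d G A' B' D') := by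
    by_contra! h
    exact hclean ⟨hadj, h⟩
  obtain ⟨A, hA, hA'A, hA_card⟩ := h𝒱 A' hA'
  obtain ⟨B, hB, hB'B, hB_card⟩ := h𝒱 B' hB'
  obtain ⟨D, hD, hD'D, hD_card⟩ := h𝒞 D' hD'
  refine ⟨mem_biUnion.2 ⟨A', hA', hx⟩, mem_biUnion.2 ⟨D', hD', hc⟩, (A, B, D),
    mem_filter.2 ⟨by simp only [mem_product, hA, hB, hD, and_self], ?_⟩, hA'A hx, hB'B hy,
    hD'D hc⟩
  by_contra! hgood
  refine hbad ⟨fun hAB => hgood.1 ?_,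
    hgood.2.slice he hαe hαε hε hA'A hB'B hD'D hA_card hB_card hD_card⟩
  exact h𝒜.elim_finset hA hB x (hA'A hx) (hB'B (hAB ▸ hx))

theorem sum_degIn_eq_card (G : C → SimpleGraph V) (v : V) (B : Finset V) (D : Finset C) :
    ∑ c ∈ D, degIn (G c) v B = #{p ∈ D ×ˢ B | (G p.1).Adj v p.2} := by
  simp only [degIn, card_filter, sum_product]

variable [Fintype V] {T : Finset (Finset V × Finset V × Finset C)}

theorem sum_degOf_le_of_lost_subset [Fintype C] {v : V}
    (hT : ∀ c w, (G c).Adj v w → ¬ (G' c).Adj v w →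
      ∃ t ∈ T, v ∈ t.1 ∧ w ∈ t.2.1 ∧ c ∈ t.2.2) :
    ∑ c, degOf (G c) v ≤
      ∑ c, degOf (G' c) v + ∑ t ∈ T with v ∈ t.1, ∑ c ∈ t.2.2, degIn (G c) v t.2.1 := by
  have hdeg (H : C → SimpleGraph V) :
      ∑ c, degOf (H c) v = #{p : C × V | (H p.1).Adj v p.2} :=
    sum_degIn_eq_card H v univ univ
  calc
    ∑ c, degOf (G c) v = #{p : C × V | (G p.1).Adj v p.2} := hdeg G
    _ ≤ #(({p : C × V | (G' p.1).Adj v p.2} : Finset _) ∪ {t ∈ T | v ∈ t.1}.biUnion fun t =>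
          {p ∈ t.2.2 ×ˢ t.2.1 | (G p.1).Adj v p.2}) := by
      refine card_le_card fun p hp => ?_
      have hadj : (G p.1).Adj v p.2 := (mem_filter.1 hp).2
      by_cases hkept : (G' p.1).Adj v p.2
      · exact mem_union_left _ (mem_filter.2 ⟨mem_univ p, hkept⟩)
      · obtain ⟨t, ht, hv, hw, hc⟩ := hT p.1 p.2 hadj hkept
        exact mem_union_right _ (mem_biUnion.2 ⟨t, mem_filter.2 ⟨ht, hv⟩,
          mem_filter.2 ⟨mem_product.2 ⟨hc, hw⟩, hadj⟩⟩)
    _ ≤ #{p : C × V | (G' p.1).Adj v p.2} +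
          ∑ t ∈ T with v ∈ t.1, #{p ∈ t.2.2 ×ˢ t.2.1 | (G p.1).Adj v p.2} :=
      (card_union_le _ _).trans (Nat.add_le_add_left card_biUnion_le _)
    _ = _ := by simp only [hdeg, sum_degIn_eq_card]

theorem edgeCnt_le_of_lost_subset {c : C}
    (hT : ∀ x y, (G c).Adj x y → ¬ (G' c).Adj x y →
      ∃ t ∈ T, x ∈ t.1 ∧ y ∈ t.2.1 ∧ c ∈ t.2.2) :
    edgeCnt (G c) ≤ edgeCnt (G' c) + ∑ t ∈ T with c ∈ t.2.2, pairCount (G c) t.1 t.2.1 := by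
  calc
    edgeCnt (G c) ≤ #(({e : Sym2 V | e ∈ (G' c).edgeSet} : Finset _) ∪
        {t ∈ T | c ∈ t.2.2}.biUnion fun t =>
          {p ∈ t.1 ×ˢ t.2.1 | (G c).Adj p.1 p.2}.image fun p => s(p.1, p.2)) := by
      refine card_le_card fun e => ?_
      induction e with | _ x y
      intro hxy
      have hadj : (G c).Adj x y := (mem_filter.1 hxy).2
      by_cases hkept : (G' c).Adj x y
      · exact mem_union_left _ (mem_filter.2 ⟨mem_univ _, hkept⟩)
      · obtain ⟨t, ht, hx, hy, hc⟩ := hT x y hadj hkept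
        exact mem_union_right _ (mem_biUnion.2 ⟨t, mem_filter.2 ⟨ht, hc⟩,
          mem_image.2 ⟨(x, y), mem_filter.2 ⟨mem_product.2 ⟨hx, hy⟩, hadj⟩, rfl⟩⟩)
    _ ≤ _ := (card_union_le _ _).trans (Nat.add_le_add_left
      (card_biUnion_le.trans (sum_le_sum fun _ _ => card_image_le)) _)

end Cleaning

section Assembly

universe u v

variable {V C X : Type*} {G : C → SimpleGraph V} {𝒜 : Finset (Finset X)} {e η κ θ d δ ε ℓ : ℝ}
  {m : ℕ}

theorem IsAlmostEquipartition.le_card [Fintype X] (h : IsAlmostEquipartition 𝒜 m ℓ) {k s : ℝ}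
    (hs : 0 < s) (hm : m ≤ s) (hk : k * s + ℓ ≤ Fintype.card X) : k ≤ #𝒜 := by
  refine le_of_mul_le_mul_right ?_ hs
  calc
    k * s ≤ #𝒜 * m := by linarith [h.card_le_card_mul_add]
    _ ≤ #𝒜 * s := by gcongr

theorem le_two_mul_sub_floor (hκ₀ : 0 ≤ κ) (hκ : κ ≤ 1 / 2) (m : ℕ) :
    (m : ℝ) ≤ 2 * (m - ⌊κ * m⌋₊ : ℕ) := by
  have hfloor : (⌊κ * m⌋₊ : ℝ) ≤ 1 / 2 * m :=
    (Nat.floor_le (by positivity)).trans (by gcongr)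
  have hsub : (m : ℝ) ≤ (m - ⌊κ * m⌋₊ : ℕ) + ⌊κ * m⌋₊ := by
    exact_mod_cast le_tsub_add
  linarith

theorem IsRegularClustering.exists_trim [Fintype V] [Fintype C] {𝒜 : Finset (Finset V)}
    {𝒟 : Finset (Finset C)} (h : IsRegularClustering e η G 𝒜 𝒟 m) (he : 0 ≤ e) (he₁ : 2 * e ≤ 1)
    (hε : 2 * e ≤ ε) (hκ₀ : 0 < κ) (hκ : κ ≤ 1 / 2) {BV : Finset V} {BC : Finset C}
    (hBV : #BV ≤ κ ^ 2 * Fintype.card V) (hBC : #BC ≤ κ ^ 2 * Fintype.card C) :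
    ∃ 𝒱 𝒞 m', IsAlmostEquipartition 𝒱 m' (η * Fintype.card V + 2 * κ * Fintype.card V) ∧
      IsAlmostEquipartition 𝒞 m' (η * Fintype.card V + 2 * κ * Fintype.card C) ∧
      m' ≤ m ∧ #𝒱 ≤ #𝒜 ∧ #𝒞 ≤ #𝒟 ∧
      ∀ c x y, (G c).Adj x y → ¬ (cleanGraph ε d G 𝒱 𝒞 c).Adj x y →
        x ∉ BV ∧ c ∉ BC ∧ ∃ t ∈ badTriples e d G 𝒜 𝒟, x ∈ t.1 ∧ y ∈ t.2.1 ∧ c ∈ t.2.2 := by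
  obtain ⟨𝒱, h𝒱, h𝒱_card, h𝒱_sub⟩ := h.vertices.exists_trim h.size_pos hκ₀ (by linarith) hBV
  obtain ⟨𝒞, h𝒞, h𝒞_card, h𝒞_sub⟩ := h.colours.exists_trim h.size_pos hκ₀ (by linarith) hBC
  have hm := le_two_mul_sub_floor hκ₀.le hκ m
  refine ⟨𝒱, 𝒞, m - ⌊κ * m⌋₊, h𝒱, h𝒞, Nat.sub_le _ _, h𝒱_card, h𝒞_card,
    fun c x y hadj hclean => ?_⟩
  obtain ⟨hx, hc, hbad⟩ := exists_badTriple_of_not_cleanGraph_adj he he₁ hε hε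
    h.vertices.pairwiseDisjoint
    (fun A' hA' => (h𝒱_sub A' hA').2.imp fun A hA =>
      ⟨hA.1, hA.2, by rwa [h.vertices.sized hA.1, h𝒱.sized hA']⟩)
    (fun D' hD' => (h𝒞_sub D' hD').2.imp fun D hD =>
      ⟨hD.1, hD.2, by rwa [h.colours.sized hD.1, h𝒞.sized hD']⟩) hadj hclean
  exact ⟨disjoint_left.1 ((disjoint_biUnion_left _ _ _).2 fun A hA => (h𝒱_sub A hA).1) hx,
    disjoint_left.1 ((disjoint_biUnion_left _ _ _).2 fun D hD => (h𝒞_sub D hD).1) hc, hbad⟩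

theorem IsRegularClustering.exists_cleanGraph [Fintype V] [Fintype C] [Nonempty V]
    {𝒜 : Finset (Finset V)} {𝒟 : Finset (Finset C)} (h : IsRegularClustering e η G 𝒜 𝒟 m)
    (he : 0 ≤ e) (he₁ : 2 * e ≤ 1) (hε : 2 * e ≤ ε) (hd : 0 ≤ d) (hθ : 0 < θ) (hκ₀ : 0 < κ)
    (hκ : κ ≤ 1 / 2) (hV : (2 * e + η) * Fintype.card C ≤ κ ^ 2 * θ * Fintype.card V)
    (hC : 2 * e + η ≤ κ ^ 2 * θ) :
    ∃ 𝒱 𝒞 m', IsAlmostEquipartition 𝒱 m' (η * Fintype.card V + 2 * κ * Fintype.card V) ∧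
      IsAlmostEquipartition 𝒞 m' (η * Fintype.card V + 2 * κ * Fintype.card C) ∧
      m' ≤ m ∧ #𝒱 ≤ #𝒜 ∧ #𝒞 ≤ #𝒟 ∧
      (∀ v, ∑ c, (degOf (G c) v : ℝ) ≤ ∑ c, (degOf (cleanGraph ε d G 𝒱 𝒞 c) v : ℝ) +
        (θ * Fintype.card V ^ 2 + (d + 2 * e) * (Fintype.card V * Fintype.card C))) ∧
      ∀ c, (edgeCnt (G c) : ℝ) ≤ edgeCnt (cleanGraph ε d G 𝒱 𝒞 c) +
        (θ * Fintype.card V ^ 2 + (d + 2 * e) * Fintype.card V ^ 2) := by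
  obtain ⟨BV, hBV, hlossV⟩ := h.exists_exceptional_vertices he (by linarith) hd hθ.le
  obtain ⟨BC, hBC, hlossC⟩ := h.exists_exceptional_colours he (by linarith) hd hθ.le
  obtain ⟨𝒱, 𝒞, m', h𝒱, h𝒞, hm', h𝒱_card, h𝒞_card, hlost⟩ := h.exists_trim (d := d) he he₁ hε hκ₀ hκ
    (le_of_mul_le_mul_right (hBV.trans (hV.trans_eq (by ring))) hθ)
    (le_of_mul_le_mul_right (hBC.trans ((mul_le_mul_of_nonneg_right hC (Nat.cast_nonneg _)).trans_eq
      (by ring))) hθ)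
  refine ⟨𝒱, 𝒞, m', h𝒱, h𝒞, hm', h𝒱_card, h𝒞_card, fun v => ?_, fun c => ?_⟩
  · by_cases hv : v ∈ BV
    · have hdeg : ∑ c, degOf (G c) v ≤ ∑ c, degOf (cleanGraph ε d G 𝒱 𝒞 c) v + _ :=
        sum_degOf_le_of_lost_subset (T := ∅) fun c w hadj hcut =>
          absurd hv (hlost c v w hadj hcut).1
      refine le_add_of_le_of_nonneg (by exact_mod_cast hdeg) (by positivity)
    · have hdeg : ∑ c, degOf (G c) v ≤ ∑ c, degOf (cleanGraph ε d G 𝒱 𝒞 c) v + _ :=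
        sum_degOf_le_of_lost_subset fun c w hadj hcut => (hlost c v w hadj hcut).2.2
      exact le_trans (by exact_mod_cast hdeg) (add_le_add_right (hlossV v hv) _)
  · by_cases hc : c ∈ BC
    · have hedge : edgeCnt (G c) ≤ edgeCnt (cleanGraph ε d G 𝒱 𝒞 c) + _ :=
        edgeCnt_le_of_lost_subset (G := G) (G' := cleanGraph ε d G 𝒱 𝒞) (T := ∅)
          fun x y hadj hcut => absurd hc (hlost c x y hadj hcut).2.1
      refine le_add_of_le_of_nonneg (by exact_mod_cast hedge) (by positivity)
    · have hedge : edgeCnt (G c) ≤ edgeCnt (cleanGraph ε d G 𝒱 𝒞 c) + _ :=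
        edgeCnt_le_of_lost_subset (G := G) (G' := cleanGraph ε d G 𝒱 𝒞)
          fun x y hadj hcut => (hlost c x y hadj hcut).2.2
      exact le_trans (by exact_mod_cast hedge) (add_le_add_right (hlossC c hc) _)

theorem exists_cleaning_parameters (L₀ : ℕ) (hε : 0 < ε) (hδ : 0 < δ) (hδ₁ : δ ≤ 1) :
    ∃ κ θ e η : ℝ, 0 < κ ∧ κ ≤ 1 / 4 ∧ 0 < θ ∧ 0 < e ∧ 2 * e ≤ 1 ∧ 2 * e ≤ ε ∧ 0 < η ∧
      2 * e + η ≤ κ ^ 2 * θ * δ ∧ (L₀ + 1) * η ≤ δ / 2 ∧ θ + 2 * e / δ < ε ∧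
      2 * η + 2 * κ + 2 * κ / δ ≤ ε := by
  obtain ⟨r, hr, hrε, hr₁⟩ : ∃ r : ℝ, 0 < r ∧ 8 * r ≤ ε ∧ 8 * r ≤ 1 :=
    ⟨min ε 1 / 8, by positivity, by linarith [min_le_left ε 1], by linarith [min_le_right ε 1]⟩
  let κ := r * δ
  let e := κ ^ 2 * r * δ / 4
  have hκr : κ ≤ r := mul_le_of_le_one_right hr.le hδ₁
  have hκδ : κ / δ = r := mul_div_cancel_right₀ r hδ.ne'
  have hκ₀ : 0 < κ := by positivity
  have he₀ : 0 < e := by positivity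
  have he4 : 4 * e = κ ^ 2 * r * δ := mul_div_cancel₀ _ four_ne_zero
  have he : e / δ ≤ r / 4 := by
    calc
      e / δ = κ ^ 2 * (r / 4) := by
        simp only [e]
        field_simp
      _ ≤ r / 4 := mul_le_of_le_one_left (by positivity) (pow_le_one₀ hκ₀.le (by linarith))
  have her : e ≤ r / 4 := he.trans' (le_div_self he₀.le hδ hδ₁)
  have hη := min_le_left e (δ / (2 * (L₀ + 1)))
  refine ⟨κ, r, e, min e (δ / (2 * (L₀ + 1))), hκ₀, by linarith, hr, he₀, by linarith,
    by linarith, by positivity, by linarith, ?_, ?_, ?_⟩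
  · calc
      (L₀ + 1) * min e (δ / (2 * (L₀ + 1))) ≤ (L₀ + 1) * (δ / (2 * (L₀ + 1))) := by
        gcongr
        exact min_le_right _ _
      _ = δ / 2 := by field_simp
  · rw [mul_div_assoc]
    linarith
  · rw [mul_div_assoc, hκδ]
    linarith

theorem cleaning_loss_lt {n x : ℝ} (he : 0 ≤ e) (hδ : 0 < δ) (hδ₁ : δ ≤ 1) (hd : 0 ≤ d)
    (hε : θ + 2 * e / δ < ε) (hn : 0 < n) (hx : x ≤ n ^ 2 / δ) :
    θ * n ^ 2 + (d + 2 * e) * x < (3 * d / δ ^ 2 + ε) * n ^ 2 := by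
  have hdδ : d / δ ≤ 3 * d / δ ^ 2 := by
    gcongr
    · linarith
    · exact pow_le_of_le_one hδ.le hδ₁ two_ne_zero
  calc
    θ * n ^ 2 + (d + 2 * e) * x ≤ θ * n ^ 2 + (d + 2 * e) * (n ^ 2 / δ) := by gcongr
    _ = (d / δ + (θ + 2 * e / δ)) * n ^ 2 := by ring
    _ < (3 * d / δ ^ 2 + ε) * n ^ 2 := by
      gcongr ?_ * _
      linarith

theorem IsAlmostEquipartition.le_card_of_trim [Fintype X] {n : ℝ} {L₀ : ℕ}
    (h : IsAlmostEquipartition 𝒜 m (η * n + 2 * κ * Fintype.card X)) (hη : 0 < η) (hn : 0 < n)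
    (hm : m ≤ η * n) (hκ : κ ≤ 1 / 4) (hL₀ : (L₀ + 1) * η ≤ δ / 2)
    (hX : δ * n ≤ Fintype.card X) : L₀ ≤ #𝒜 := by
  have hsize : L₀ * (η * n) + (η * n + 2 * κ * Fintype.card X) ≤ Fintype.card X := by
    calc
      L₀ * (η * n) + (η * n + 2 * κ * Fintype.card X)
          = (L₀ + 1) * η * n + 2 * κ * Fintype.card X := by ring
      _ ≤ δ / 2 * n + 2 * (1 / 4) * Fintype.card X := by gcongr
      _ ≤ Fintype.card X := by linarith
  exact_mod_cast h.le_card (by positivity) hm hsize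

theorem exists_cleanGraph {ε δ : ℝ} (L₀ : ℕ) (hε : 0 < ε) (hδ : 0 < δ) (hδ₁ : δ ≤ 1) :
    ∃ K : ℕ, ∀ (V : Type u) (C : Type v) [Fintype V] [Fintype C] [Nonempty V] [Nonempty C]
      (G : C → SimpleGraph V) (d : ℝ), 0 ≤ d → K ≤ Fintype.card V →
      δ * Fintype.card V ≤ Fintype.card C → Fintype.card C ≤ Fintype.card V / δ →
      ∃ 𝒱 𝒞 m ℓ₁ ℓ₂, IsAlmostEquipartition 𝒱 m ℓ₁ ∧ IsAlmostEquipartition 𝒞 m ℓ₂ ∧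
        ℓ₁ + ℓ₂ ≤ ε * Fintype.card V ∧ L₀ ≤ #𝒱 ∧ #𝒱 ≤ K ∧ L₀ ≤ #𝒞 ∧ #𝒞 ≤ K ∧
        (∀ v, ∑ c, (degOf (G c) v : ℝ) - (3 * d / δ ^ 2 + ε) * Fintype.card V ^ 2 <
          ∑ c, (degOf (cleanGraph ε d G 𝒱 𝒞 c) v : ℝ)) ∧
        ∀ c, (edgeCnt (G c) : ℝ) - (3 * d / δ ^ 2 + ε) * Fintype.card V ^ 2 <
          edgeCnt (cleanGraph ε d G 𝒱 𝒞 c) := by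
  obtain ⟨κ, θ, e, η, hκ₀, hκ, hθ, he₀, he₁, heε, hη, hbad, hL₀, hloss, huncovered⟩ :=
    exists_cleaning_parameters L₀ hε hδ hδ₁
  obtain ⟨K, hK⟩ := exists_isRegularClustering.{u, v} he₀ hη (one_le_one_div hδ hδ₁)
  refine ⟨K, fun V C _ _ _ _ G d hd hV hVC hCV => ?_⟩
  set n : ℝ := (Fintype.card V : ℝ)
  set N : ℝ := (Fintype.card C : ℝ)
  have hn : 0 < n := by positivity
  have hnN : n * N ≤ n ^ 2 / δ := by
    calc
      n * N ≤ n * (n / δ) := by gcongr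
      _ = n ^ 2 / δ := by ring
  have hn2 : n ^ 2 ≤ n ^ 2 / δ := le_div_self (sq_nonneg n) hδ hδ₁
  have hbadV : (2 * e + η) * N ≤ κ ^ 2 * θ * n := by
    calc
      (2 * e + η) * N ≤ κ ^ 2 * θ * δ * (n / δ) := by gcongr
      _ = κ ^ 2 * θ * n := by field_simp
  have hbadC : 2 * e + η ≤ κ ^ 2 * θ := hbad.trans (mul_le_of_le_one_right (by positivity) hδ₁)
  obtain ⟨𝒜, 𝒟, m, hreg, h𝒜K, h𝒟K⟩ := hK V C G hV (hCV.trans_eq (one_div_mul_eq_div _ _).symm)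
  obtain ⟨𝒱, 𝒞, m', h𝒱, h𝒞, hm', h𝒱𝒜, h𝒞𝒟, hlossV, hlossC⟩ := hreg.exists_cleanGraph
    (d := d) he₀.le he₁ heε hd hθ hκ₀ (by linarith) hbadV hbadC
  have hm'_le : (m' : ℝ) ≤ η * n := hreg.size_le.trans' (by exact_mod_cast hm')
  refine ⟨𝒱, 𝒞, m', _, _, h𝒱, h𝒞, ?_, h𝒱.le_card_of_trim hη hn hm'_le hκ hL₀
    (mul_le_of_le_one_left hn.le hδ₁), h𝒱𝒜.trans h𝒜K, h𝒞.le_card_of_trim hη hn hm'_le hκ hL₀ hVC,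
    h𝒞𝒟.trans h𝒟K, fun v => ?_, fun c => ?_⟩
  · calc
      η * n + 2 * κ * n + (η * n + 2 * κ * N)
          ≤ η * n + 2 * κ * n + (η * n + 2 * κ * (n / δ)) := by gcongr
      _ = (2 * η + 2 * κ + 2 * κ / δ) * n := by ring
      _ ≤ ε * n := by gcongr
  · linarith [hlossV v, cleaning_loss_lt he₀.le hδ hδ₁ hd hloss hn hnN]
  · linarith [hlossC c, cleaning_loss_lt he₀.le hδ hδ₁ hd hloss hn hn2]

/-- The enumeration `V₀, V₁, …, V_L` of a family `𝒜` of `L` disjoint clusters, as it appears in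
partitions with an exceptional set: `V₀` consists of the uncovered points, `V₁, …, V_L` run through
`𝒜`, and all later sets are empty. -/
noncomputable def clusterSeq [Fintype X] (𝒜 : Finset (Finset X)) : ℕ → Finset X
  | 0 => (𝒜.biUnion id)ᶜ
  | i + 1 => if h : i < #𝒜 then 𝒜.equivFin.symm ⟨i, h⟩ else ∅

variable [Fintype X] {i j : ℕ}

theorem clusterSeq_of_mem_Icc (hi : i ∈ Set.Icc 1 #𝒜) :
    clusterSeq 𝒜 i = 𝒜.equivFin.symm ⟨i - 1, Nat.sub_one_lt_of_le hi.1 hi.2⟩ := by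
  obtain ⟨k, rfl⟩ := Nat.exists_eq_add_of_le' hi.1
  exact dif_pos hi.2

theorem clusterSeq_mem (hi : i ∈ Set.Icc 1 #𝒜) : clusterSeq 𝒜 i ∈ 𝒜 := by
  rw [clusterSeq_of_mem_Icc hi]
  exact Subtype.prop _

theorem clusterSeq_injOn : Set.InjOn (clusterSeq 𝒜) (Set.Icc 1 #𝒜) := fun i hi j hj hij => by
  rw [clusterSeq_of_mem_Icc hi, clusterSeq_of_mem_Icc hj, Subtype.coe_inj, Equiv.apply_eq_iff_eq,
    Fin.mk.injEq] at hij
  exact Nat.sub_one_cancel hi.1 hj.1 hij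

theorem clusterSeq_of_card_lt (hi : #𝒜 < i) : clusterSeq 𝒜 i = ∅ := by
  obtain ⟨k, rfl⟩ := Nat.exists_eq_add_of_le' (Nat.one_le_of_lt hi)
  exact dif_neg (Nat.lt_succ_iff.1 hi).not_gt

theorem disjoint_clusterSeq (h𝒜 : (𝒜 : Set (Finset X)).PairwiseDisjoint id) (hij : i ≠ j) :
    Disjoint (clusterSeq 𝒜 i) (clusterSeq 𝒜 j) := by
  wlog hlt : i < j generalizing i j
  · exact (this hij.symm (hij.lt_or_gt.resolve_left hlt)).symm
  rcases lt_or_ge #𝒜 j with hj | hj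
  · rw [clusterSeq_of_card_lt hj]
    exact disjoint_empty_right _
  have hj : j ∈ Set.Icc 1 #𝒜 := ⟨Nat.one_le_of_lt hlt, hj⟩
  rcases Nat.eq_zero_or_pos i with rfl | hi
  · exact disjoint_compl_left.mono_right (subset_biUnion_of_mem id (clusterSeq_mem hj))
  · have hi : i ∈ Set.Icc 1 #𝒜 := ⟨hi, hlt.le.trans hj.2⟩
    exact h𝒜 (clusterSeq_mem hi) (clusterSeq_mem hj) (clusterSeq_injOn.ne hi hj hij)

theorem biUnion_clusterSeq (𝒜 : Finset (Finset X)) :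
    (range (#𝒜 + 1)).biUnion (clusterSeq 𝒜) = univ := by
  refine eq_univ_of_forall fun x => mem_biUnion.2 ?_
  by_cases hx : x ∈ 𝒜.biUnion id
  · obtain ⟨A, hA, hxA⟩ := mem_biUnion.1 hx
    let k := 𝒜.equivFin ⟨A, hA⟩
    refine ⟨k + 1, mem_range.2 (Nat.succ_lt_succ k.2), ?_⟩
    rw [clusterSeq_of_mem_Icc ⟨Nat.le_add_left 1 k, k.2⟩]
    simpa [k] using hxA
  · exact ⟨0, mem_range.2 (Nat.succ_pos _), mem_compl.2 hx⟩

theorem le_one_of_mul_le_div {n N : ℝ} (hδ : 0 < δ) (hn : 0 < n) (hN : δ * n ≤ N)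
    (hN' : N ≤ n / δ) : δ ≤ 1 := by
  have hsq : δ ^ 2 * n ≤ 1 * n := by
    linarith [(le_div_iff₀ hδ).1 (hN.trans hN')]
  exact (sq_le_one_iff₀ hδ.le).1 (le_of_mul_le_mul_right hsq hn)

end Assembly

theorem stmt8_general.{u, v} (L₀ : ℕ) (ε δ : ℝ) (hε : 0 < ε) (hδ : 0 < δ) :
    ∃ n₀ : ℕ, ∀ d : ℝ, 0 ≤ d →
    ∀ (V : Type u) [Fintype V] (C : Type v) [Fintype C] (G : C → SimpleGraph V) (n : ℕ),
      Fintype.card V = n → n₀ ≤ n →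
      δ * (n : ℝ) ≤ (Fintype.card C : ℝ) → (Fintype.card C : ℝ) ≤ (n : ℝ) / δ →
      ∃ (L M : ℕ) (Vp : ℕ → Finset V) (Cp : ℕ → Finset C) (G' : C → SimpleGraph V),
        (∀ c, G' c ≤ G c) ∧
        (∀ i j, i ≠ j → Disjoint (Vp i) (Vp j)) ∧
        ((Finset.range (L + 1)).biUnion Vp = (univ : Finset V)) ∧
        (∀ i j, i ≠ j → Disjoint (Cp i) (Cp j)) ∧
        ((Finset.range (M + 1)).biUnion Cp = (univ : Finset C)) ∧
        (L₀ ≤ L ∧ L ≤ n₀ ∧ L₀ ≤ M ∧ M ≤ n₀ ∧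
          (((Vp 0).card : ℝ) + ((Cp 0).card : ℝ) ≤ ε * (n : ℝ))) ∧
        (∃ m : ℕ, (∀ i, 1 ≤ i → i ≤ L → (Vp i).card = m) ∧
          (∀ j, 1 ≤ j → j ≤ M → (Cp j).card = m)) ∧
        (∀ v : V, (∑ c : C, (degOf (G c) v : ℝ)) - (3 * d / δ ^ 2 + ε) * (n : ℝ) ^ 2 <
          ∑ c : C, (degOf (G' c) v : ℝ)) ∧
        (∀ c : C, (edgeCnt (G c) : ℝ) - (3 * d / δ ^ 2 + ε) * (n : ℝ) ^ 2 <
          (edgeCnt (G' c) : ℝ)) ∧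
        (∀ c : C, ∀ i, 1 ≤ i → i ≤ L →
          (∃ x ∈ Vp i, ∃ y ∈ Vp i, (G' c).Adj x y) → c ∈ Cp 0) ∧
        (∀ h i, 1 ≤ h → h ≤ L → 1 ≤ i → i ≤ L → h ≠ i → ∀ j, 1 ≤ j → j ≤ M →
          (∀ c ∈ Cp j, pairCount (G' c) (Vp h) (Vp i) = 0) ∨
          ColReg ε d G' (Vp h) (Vp i) (Cp j)) := by
  rcases lt_or_ge 1 δ with hδ₁ | hδ₁
  · refine ⟨1, fun d _ V _ C _ G n _ hn hC hC' => ?_⟩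
    exact absurd (le_one_of_mul_le_div hδ (Nat.cast_pos.2 hn) hC hC') hδ₁.not_ge
  obtain ⟨K, hK⟩ := exists_cleanGraph.{u, v} L₀ hε hδ hδ₁
  refine ⟨K + 1, fun d hd V _ C _ G n hn hKn hC hC' => ?_⟩
  subst hn
  have hV : 0 < Fintype.card V := by omega
  have : Nonempty V := Fintype.card_pos_iff.1 hV
  have : Nonempty C :=
    Fintype.card_pos_iff.1 (Nat.cast_pos.1 (hC.trans_lt' (mul_pos hδ (Nat.cast_pos.2 hV))))
  obtain ⟨𝒱, 𝒞, m, ℓ₁, ℓ₂, h𝒱, h𝒞, hℓ, hL, hL', hM, hM', hdeg, hedge⟩ :=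
    hK V C G d hd (by omega) hC hC'
  refine ⟨#𝒱, #𝒞, clusterSeq 𝒱, clusterSeq 𝒞, cleanGraph ε d G 𝒱 𝒞, cleanGraph_le,
    fun _ _ => disjoint_clusterSeq h𝒱.pairwiseDisjoint, biUnion_clusterSeq 𝒱,
    fun _ _ => disjoint_clusterSeq h𝒞.pairwiseDisjoint, biUnion_clusterSeq 𝒞,
    ⟨hL, hL'.trans K.le_succ, hM, hM'.trans K.le_succ,
      (add_le_add h𝒱.card_uncovered_le h𝒞.card_uncovered_le).trans hℓ⟩,
    ⟨m, fun i hi hi' => h𝒱.sized (clusterSeq_mem ⟨hi, hi'⟩),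
      fun j hj hj' => h𝒞.sized (clusterSeq_mem ⟨hj, hj'⟩)⟩,
    hdeg, hedge, fun c i hi hi' ⟨x, hx, y, hy, hadj⟩ => ?_,
    fun h i hh hh' hi hi' hne j hj hj' => ?_⟩
  · refine mem_compl.2 fun hc => ?_
    obtain ⟨D, hD, hcD⟩ := mem_biUnion.1 hc
    exact not_cleanGraph_adj_of_mem (clusterSeq_mem ⟨hi, hi'⟩) hD hx hy hcD hadj
  · exact pairCount_cleanGraph_eq_zero_or_colReg h𝒱.pairwiseDisjoint h𝒞.pairwiseDisjoint
      (clusterSeq_mem ⟨hh, hh'⟩) (clusterSeq_mem ⟨hi, hi'⟩) (clusterSeq_mem ⟨hj, hj'⟩)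
      (clusterSeq_injOn.ne ⟨hh, hh'⟩ ⟨hi, hi'⟩ hne)

/-! ## Statement 8 -/

theorem stmt8 (L₀ : ℕ) (hL₀ : 1 ≤ L₀) (ε δ : ℝ) (hε : 0 < ε) (hδ : 0 < δ) :
    ∃ n₀ : ℕ, ∀ d : ℝ, 0 ≤ d → d < 1 →
    ∀ (V : Type) [Fintype V] (C : Type) [Fintype C] (G : C → SimpleGraph V) (n : ℕ),
      Fintype.card V = n → n₀ ≤ n →
      δ * (n : ℝ) ≤ (Fintype.card C : ℝ) → (Fintype.card C : ℝ) ≤ (n : ℝ) / δ →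
      ∃ (L M : ℕ) (Vp : ℕ → Finset V) (Cp : ℕ → Finset C) (G' : C → SimpleGraph V),
        (∀ c, G' c ≤ G c) ∧
        (∀ i j, i ≠ j → Disjoint (Vp i) (Vp j)) ∧
        ((Finset.range (L + 1)).biUnion Vp = (univ : Finset V)) ∧
        (∀ i j, i ≠ j → Disjoint (Cp i) (Cp j)) ∧
        ((Finset.range (M + 1)).biUnion Cp = (univ : Finset C)) ∧
        (L₀ ≤ L ∧ L ≤ n₀ ∧ L₀ ≤ M ∧ M ≤ n₀ ∧
          (((Vp 0).card : ℝ) + ((Cp 0).card : ℝ) ≤ ε * (n : ℝ))) ∧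
        (∃ m : ℕ, (∀ i, 1 ≤ i → i ≤ L → (Vp i).card = m) ∧
          (∀ j, 1 ≤ j → j ≤ M → (Cp j).card = m)) ∧
        (∀ v : V, (∑ c : C, (degOf (G c) v : ℝ)) - (3 * d / δ ^ 2 + ε) * (n : ℝ) ^ 2 <
          ∑ c : C, (degOf (G' c) v : ℝ)) ∧
        (∀ c : C, (edgeCnt (G c) : ℝ) - (3 * d / δ ^ 2 + ε) * (n : ℝ) ^ 2 <
          (edgeCnt (G' c) : ℝ)) ∧
        (∀ c : C, ∀ i, 1 ≤ i → i ≤ L →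
          (∃ x ∈ Vp i, ∃ y ∈ Vp i, (G' c).Adj x y) → c ∈ Cp 0) ∧
        (∀ h i, 1 ≤ h → h ≤ L → 1 ≤ i → i ≤ L → h ≠ i → ∀ j, 1 ≤ j → j ≤ M →
          (∀ c ∈ Cp j, pairCount (G' c) (Vp h) (Vp i) = 0) ∨
          ColReg ε d G' (Vp h) (Vp i) (Cp j)) := by
  obtain ⟨n₀, h⟩ := stmt8_general L₀ ε δ hε hδ
  exact ⟨n₀, fun d hd _ => h d hd⟩
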